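/- arXiv:1511.02093 — 4 statements merged into one kernel-verified Lean document; each statement's English description precedes it below -/
import Mathlib

section
/- Let q be a power of a prime p, let k, f be positive integers with f | k, and let a ∈ F_q^*. Then the set D = {x ∈ F_{q^k} : Tr_{q^f/q}(x^{(q^k-1)/(q^f-1)}) + a = 0} has cardinality |D| = q^{f-1}(q^k - 1)/(q^f - 1). -/
theorem card_fiber_aux {G H : Type*} [Group G] [Group H] [Fintype G] [Fintype H]
    (φ : G →* H) (hφ : Function.Surjective φ) (P : H → Prop) :
    Nat.card {g // P (φ g)} * Nat.card H = Nat.card {h // P h} * Nat.card G := by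
  classical
  have key : ∀ Q : H → Prop, Nat.card {g // Q (φ g)} =
      Nat.card {h // Q h} * (Finset.univ.filter fun g => φ g = 1).card := by
    intro Q
    rw [Nat.card_eq_fintype_card, Nat.card_eq_fintype_card, Fintype.card_subtype,
      Fintype.card_subtype]
    rw [Finset.card_eq_sum_card_fiberwise (f := φ) (t := Finset.univ.filter Q)
      (by intro x hx; simpa using hx)]
    rw [Finset.sum_const_nat]
    intro h hh
    have hh : Q h := by simpa using hh
    rw [Finset.filter_filter]
    rw [← MonoidHom.card_fiber_eq_of_mem_range φ (hφ h) (hφ 1)]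
    congr 1
    ext g
    simp only [Finset.mem_filter, Finset.mem_univ, true_and]
    exact ⟨fun h => h.2, fun h => ⟨h ▸ hh, h⟩⟩
  have h1 := key P
  have h2 := key (fun _ => True)
  have e1 : Nat.card {g : G // True} = Nat.card G := Nat.card_congr (Equiv.subtypeUnivEquiv (by simp))
  have e2 : Nat.card {g : H // True} = Nat.card H := Nat.card_congr (Equiv.subtypeUnivEquiv (by simp))
  rw [e1, e2] at h2
  rw [h1, h2]
  ring

theorem card_fiber_aux_add {G H : Type*} [AddGroup G] [AddGroup H] [Fintype G] [Fintype H]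
    (φ : G →+ H) (hφ : Function.Surjective φ) (P : H → Prop) :
    Nat.card {g // P (φ g)} * Nat.card H = Nat.card {h // P h} * Nat.card G :=
  card_fiber_aux (AddMonoidHom.toMultiplicative φ) hφ P

theorem card_units_aux {K : Type*} [Field K] (P : K → Prop) (h0 : ¬ P 0) :
    Nat.card {x : K // P x} = Nat.card {u : Kˣ // P u} := by
  symm
  refine Nat.card_congr (Equiv.ofBijective (fun u => ⟨(u.1 : K), u.2⟩) ⟨?_, ?_⟩)
  · rintro ⟨u, hu⟩ ⟨v, hv⟩ h
    simpa [Units.ext_iff] using h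
  · rintro ⟨x, hx⟩
    have : x ≠ 0 := by rintro rfl; exact h0 hx
    exact ⟨⟨Units.mk0 x this, hx⟩, rfl⟩

/-- Let `q` be a power of a prime `p`, `k, f` positive integers with
`f ∣ k`, and `a ∈ F_qˣ`.  Then the set
`D = {x ∈ F_{q^k} : Tr_{q^f/q}(x^{(q^k-1)/(q^f-1)}) + a = 0}` has cardinality
`q^{f-1}(q^k - 1)/(q^f - 1)`.
Here `x^{(q^k-1)/(q^f-1)}` is the norm of `x` from `Fk` to `Ff` (hypothesis `hnorm`). -/
theorem stmt1 (p e q f k : ℕ) [Fact p.Prime] (he : 0 < e) (hq : q = p ^ e)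
    (hf : 0 < f) (hk : 0 < k) (hfk : f ∣ k)
    (Fq Ff Fk : Type) [Field Fq] [Field Ff] [Field Fk]
    [Fintype Fq] [Fintype Ff] [Fintype Fk]
    [Algebra Fq Ff] [Algebra Ff Fk]
    (hcq : Fintype.card Fq = q) (hcf : Fintype.card Ff = q ^ f)
    (hck : Fintype.card Fk = q ^ k)
    (hnorm : ∀ x : Fk,
      algebraMap Ff Fk (Algebra.norm Ff x) = x ^ ((q ^ k - 1) / (q ^ f - 1)))
    (a : Fq) (ha : a ≠ 0) :
    (Nat.card {x : Fk // Algebra.trace Fq Ff (Algebra.norm Ff x) + a = 0} : ℚ)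
      = (q : ℚ) ^ (f - 1) * ((q : ℚ) ^ k - 1) / ((q : ℚ) ^ f - 1) := by
  classical
  have q1 : 1 < q := by
    rw [← hcq]; exact Fintype.one_lt_card
  have hqf : 1 < q ^ f := Nat.one_lt_pow hf.ne' q1
  have A := card_units_aux (fun x : Fk => Algebra.trace Fq Ff (Algebra.norm Ff x) + a = 0)
    (by simp [ha])
  have B := card_fiber_aux (Units.map (Algebra.norm Ff (S := Fk)))
    (FiniteField.unitsMap_norm_surjective Ff Fk)
    (fun y => Algebra.trace Fq Ff (y : Ff) + a = 0)
  have C := card_units_aux (fun y : Ff => Algebra.trace Fq Ff y + a = 0) (by simp [ha])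
  have D := card_fiber_aux_add (Algebra.trace Fq Ff).toAddMonoidHom
    (Algebra.trace_surjective Fq Ff) (fun z => z + a = 0)
  have E : Nat.card {z : Fq // z + a = 0} = 1 := by
    rw [Nat.card_eq_one_iff_unique]
    refine ⟨⟨?_⟩, ⟨⟨-a, by simp⟩⟩⟩
    rintro ⟨x, hx⟩ ⟨y, hy⟩
    exact Subtype.ext (add_right_cancel (hx.trans hy.symm))
  simp only [LinearMap.toAddMonoidHom_coe, Units.coe_map] at B D
  rw [E, Nat.card_eq_fintype_card (α := Fq), Nat.card_eq_fintype_card (α := Ff), hcq, hcf, C,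
    one_mul] at D
  rw [Nat.card_units, Nat.card_units, Nat.card_eq_fintype_card (α := Fk),
    Nat.card_eq_fintype_card (α := Ff), hcf, hck] at B
  rw [A]
  have D' : Nat.card {u : Ffˣ // Algebra.trace Fq Ff (u : Ff) + a = 0} = q ^ (f - 1) := by
    refine Nat.eq_of_mul_eq_mul_right (show 0 < q by omega) ?_
    rw [D, pow_sub_one_mul hf.ne']
  rw [D'] at B
  have B' := congrArg (Nat.cast : ℕ → ℚ) B
  push_cast [Nat.cast_sub hqf.le, Nat.cast_sub (Nat.one_le_pow k q (by omega))] at B'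
  have : (q : ℚ) ^ f - 1 ≠ 0 := by
    have : (1 : ℚ) < (q : ℚ) ^ f := by exact_mod_cast hqf
    linarith
  rw [eq_div_iff this]
  exact B'
end

section
/- Let q be a power of a prime p and let k, f be positive integers with f | k. Let χ₁ and χ₂ be the canonical additive characters of F_{q^f} and F_{q^k}, respectively. Then for every b ∈ F_{q^k}^*, Σ_{x ∈ F_{q^k}^*} χ₂(b x^{q^f - 1}) = (-1)^{k/f - 1} Σ_{ψ₁} G(ψ₁, χ₁)^{k/f} · conj(ψ₁)(b^{(q^k-1)/(q^f-1)}), where the sum on the right runs over all multiplicative characters ψ₁ of F_{q^f}^*. -/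
open scoped BigOperators

namespace HD
open Polynomial Finset

section lam
variable {F : Type*} [Field F]

/-- The weight of a polynomial. -/
noncomputable def lam (ψ : MulChar F ℂ) (χ : AddChar F ℂ) (f : F[X]) : ℂ :=
  χ (-f.nextCoeff) * ψ ((-1) ^ f.natDegree * f.coeff 0)

theorem lam_mul (ψ : MulChar F ℂ) (χ : AddChar F ℂ) {f g : F[X]} (hf : f.Monic) (hg : g.Monic) :
    lam ψ χ (f * g) = lam ψ χ f * lam ψ χ g := by
  unfold lam
  rw [hf.nextCoeff_mul hg, hf.natDegree_mul hg, neg_add, AddChar.map_add_eq_mul, mul_coeff_zero,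
    pow_add, mul_mul_mul_comm, map_mul]
  ring

theorem lam_one (ψ : MulChar F ℂ) (χ : AddChar F ℂ) : lam ψ χ 1 = 1 := by
  have : nextCoeff (1 : F[X]) = 0 := by simpa using nextCoeff_C_eq_zero (1 : F)
  simp [lam, this]

theorem lam_pow (ψ : MulChar F ℂ) (χ : AddChar F ℂ) {f : F[X]} (hf : f.Monic) (j : ℕ) :
    lam ψ χ (f ^ j) = lam ψ χ f ^ j := by
  induction j with
  | zero => simp [lam_one]
  | succ j ih => rw [pow_succ, lam_mul ψ χ (hf.pow j) hf, ih, pow_succ]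

variable [Finite F]

variable (F) in
theorem finite_mon (n : ℕ) : {f : F[X] | f.Monic ∧ f.natDegree = n}.Finite := by
  have : Finite (Fin (n + 1) → F) := inferInstance
  refine Set.Finite.of_injOn (f := fun (f : F[X]) (i : Fin (n + 1)) => f.coeff i)
    (t := Set.univ) (fun _ _ => Set.mem_univ _) ?_ Set.finite_univ
  intro f hf g hg h
  ext i
  by_cases hi : i < n + 1
  · exact congrFun h ⟨i, hi⟩
  · rw [coeff_eq_zero_of_natDegree_lt (by have := hf.2; omega),
      coeff_eq_zero_of_natDegree_lt (by have := hg.2; omega)]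

variable (F) in
/-- Monic polynomials of degree `n`. -/
noncomputable def mon (n : ℕ) : Finset F[X] := (finite_mon F n).toFinset

@[simp] theorem mem_mon {n : ℕ} {f : F[X]} : f ∈ mon F n ↔ f.Monic ∧ f.natDegree = n := by
  simp [mon]

variable (F) in
open Classical in
/-- Monic irreducible polynomials of degree `n`. -/
noncomputable def irr (n : ℕ) : Finset F[X] := (mon F n).filter Irreducible

@[simp] theorem mem_irr {n : ℕ} {f : F[X]} :
    f ∈ irr F n ↔ (f.Monic ∧ f.natDegree = n) ∧ Irreducible f := by
  simp [irr]

/-- sums of weights -/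
noncomputable def S (ψ : MulChar F ℂ) (χ : AddChar F ℂ) (n : ℕ) : ℂ := ∑ f ∈ mon F n, lam ψ χ f

/-- Weighted prime power sums. -/
noncomputable def T (ψ : MulChar F ℂ) (χ : AddChar F ℂ) (m : ℕ) : ℂ :=
  ∑ x ∈ m.divisorsAntidiagonal, ∑ P ∈ irr F x.1, (x.1 : ℂ) * lam ψ χ P ^ x.2

theorem S_zero (ψ : MulChar F ℂ) (χ : AddChar F ℂ) : S ψ χ 0 = 1 := by
  have : mon F 0 = {1} := by
    ext f
    simp only [mem_mon, mem_singleton]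
    constructor
    · rintro ⟨h, h0⟩
      exact (Polynomial.Monic.natDegree_eq_zero h).mp h0
    · rintro rfl
      simp
  simp [S, this, lam_one]

theorem S_one [Fintype F] (ψ : MulChar F ℂ) (χ : AddChar F ℂ) : S ψ χ 1 = gaussSum ψ χ := by
  unfold S gaussSum
  symm
  refine Finset.sum_bij (fun a _ => X - C a) ?_ ?_ ?_ ?_
  · intro a _
    simp [monic_X_sub_C]
  · intro a _ b _ h
    simpa using h
  · intro f hf
    rw [mem_mon] at hf
    refine ⟨- f.coeff 0, mem_univ _, ?_⟩
    rw [hf.1.eq_X_add_C hf.2]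
    simp
  · intro a _
    simp [lam, nextCoeff_X_sub_C, mul_comm]

theorem S_eq_zero (ψ : MulChar F ℂ) (χ : AddChar F ℂ) (hχ : χ ≠ 1) {n : ℕ} (hn : 2 ≤ n) :
    S ψ χ n = 0 := by
  obtain ⟨t, ht⟩ : ∃ t, χ t ≠ 1 := by
    by_contra! h
    exact hχ (by ext x; simpa using h x)
  have key : ∀ (s : F) (f : F[X]), f ∈ mon F n → f + C s * X ^ (n - 1) ∈ mon F n := by
    intro s f hf
    rw [mem_mon] at hf ⊢
    have hd : (C s * X ^ (n - 1)).degree < f.degree := by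
      rw [degree_eq_natDegree hf.1.ne_zero, hf.2]
      refine (degree_C_mul_X_pow_le _ _).trans_lt ?_
      exact_mod_cast (by omega : n - 1 < n)
    refine ⟨hf.1.add_of_left hd, ?_⟩
    rw [natDegree_add_eq_left_of_degree_lt hd, hf.2]
  have h : S ψ χ n = χ t * S ψ χ n := by
    conv_lhs => unfold S
    unfold S
    rw [mul_sum]
    refine Finset.sum_bij' (fun f _ => f + C t * X ^ (n - 1)) (fun f _ => f + C (-t) * X ^ (n - 1))
      (fun f hf => key _ f hf) (fun f hf => key _ f hf) ?_ ?_ ?_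
    · intro f _; simp
    · intro f _; simp
    · intro f hf
      have h2 := key t f hf
      rw [mem_mon] at hf h2
      unfold lam
      rw [nextCoeff_of_natDegree_pos (by omega), nextCoeff_of_natDegree_pos (by omega), h2.2, hf.2]
      rw [← mul_assoc, ← AddChar.map_add_eq_mul]
      have : (0 : ℕ) ≠ n - 1 := by omega
      simp [coeff_X_pow, this]
  have h3 : (1 - χ t) * S ψ χ n = 0 := by rw [sub_mul, ← h]; ring
  rcases mul_eq_zero.mp h3 with h4 | h4
  · exact absurd (sub_eq_zero.mp h4).symm ht
  · exact h4

open Classical in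
theorem sum_dvd (ψ : MulChar F ℂ) (χ : AddChar F ℂ) {n m : ℕ} (hm : m ≤ n) {Q : F[X]}
    (hQ : Q.Monic) (hd : Q.natDegree = m) :
    ∑ f ∈ mon F n, (if Q ∣ f then lam ψ χ f else 0) = lam ψ χ Q * S ψ χ (n - m) := by
  rw [← Finset.sum_filter]
  unfold S
  rw [mul_sum]
  symm
  refine Finset.sum_bij (fun g _ => Q * g) ?_ ?_ ?_ ?_
  · intro g hg
    rw [mem_mon] at hg
    simp only [mem_filter, mem_mon, dvd_mul_right, and_true]
    refine ⟨hQ.mul hg.1, ?_⟩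
    rw [hQ.natDegree_mul hg.1]; omega
  · intro a _ b _ h
    exact mul_left_cancel₀ hQ.ne_zero h
  · intro f hf
    simp only [mem_filter, mem_mon] at hf
    obtain ⟨⟨h1, h2⟩, g, rfl⟩ := hf
    have hg : g.Monic := hQ.of_mul_monic_left h1
    refine ⟨g, ?_, rfl⟩
    rw [mem_mon]
    rw [hQ.natDegree_mul hg] at h2
    exact ⟨hg, by omega⟩
  · intro g hg
    rw [mem_mon] at hg
    rw [lam_mul ψ χ hQ hg.1]

open Classical UniqueFactorizationMonoid in
theorem natDegree_eq_sum {n : ℕ} {f : F[X]} (hf : f ∈ mon F n) :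
    (n : ℂ) = ∑ m ∈ Icc 1 n, ∑ x ∈ m.divisorsAntidiagonal, ∑ P ∈ irr F x.1,
      (if P ^ x.2 ∣ f then (x.1 : ℂ) else 0) := by
  rw [mem_mon] at hf
  have hf0 : f ≠ 0 := hf.1.ne_zero
  have hmem : ∀ P ∈ normalizedFactors f, P.Monic ∧ Irreducible P ∧ P ∣ f := by
    intro P hP
    refine ⟨?_, irreducible_of_normalized_factor P hP, dvd_of_mem_normalizedFactors hP⟩
    have := normalize_normalized_factor P hP
    rw [← this]
    exact monic_normalize (irreducible_of_normalized_factor P hP).ne_zero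
  have h1 : f.natDegree = ∑ P ∈ (normalizedFactors f).toFinset,
      (normalizedFactors f).count P * P.natDegree := by
    have hp : (normalizedFactors f).prod = f := by
      rw [prod_normalizedFactors_eq hf0, hf.1.normalize_eq_self]
    conv_lhs => rw [← hp]
    rw [natDegree_multiset_prod_of_monic _ (fun P hP => (hmem P hP).1),
      Finset.sum_multiset_map_count]
    simp
  have hcount : ∀ P : F[X], P.Monic → Irreducible P → ∀ j : ℕ,
      P ^ j ∣ f ↔ j ≤ (normalizedFactors f).count P := by
    intro P hP hi j
    rw [pow_dvd_iff_le_emultiplicity, emultiplicity_eq_count_normalizedFactors hi hf0,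
      hP.normalize_eq_self]
    exact Nat.cast_le
  have hdeg : ∀ P : F[X], P.Monic → ∀ j, P ^ j ∣ f → P.natDegree * j ≤ n := by
    intro P hP j h
    have := natDegree_le_of_dvd h hf0
    rw [hP.natDegree_pow] at this
    rw [← hf.2, mul_comm]; exact this
  have h2 : ∑ P ∈ (normalizedFactors f).toFinset,
      (normalizedFactors f).count P * P.natDegree
      = ∑ e ∈ Icc 1 n, ∑ P ∈ irr F e, (normalizedFactors f).count P * e := by
    rw [← Finset.sum_fiberwise_of_maps_to (s := (normalizedFactors f).toFinset) (t := Icc 1 n)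
      (g := natDegree)]
    · refine sum_congr rfl fun e he => ?_
      symm
      rw [← Finset.sum_subset (s₁ := ((normalizedFactors f).toFinset.filter
        (fun P => P.natDegree = e)))]
      · refine sum_congr rfl fun P hP => ?_
        rw [(mem_filter.mp hP).2]
      · intro P hP
        simp only [mem_filter, Multiset.mem_toFinset] at hP
        have := hmem P hP.1
        simp [this.1, this.2.1, hP.2]
      · intro P hP hn
        simp only [mem_filter, Multiset.mem_toFinset, not_and] at hn
        rw [mem_irr] at hP
        have : P ∉ normalizedFactors f := fun h => hn h hP.1.2
        simp [this]
    · intro P hP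
      have := hmem P (Multiset.mem_toFinset.mp hP)
      rw [mem_Icc]
      refine ⟨this.2.1.natDegree_pos, ?_⟩
      have := hdeg P this.1 1 (by simpa using this.2.2)
      simpa using this
  have h3 : ∀ e ∈ Icc 1 n, ∑ P ∈ irr F e, (((normalizedFactors f).count P * e : ℕ) : ℂ)
      = ∑ j ∈ Icc 1 n, ∑ P ∈ irr F e, (if P ^ j ∣ f then (e : ℂ) else 0) := by
    intro e he
    rw [sum_comm]
    refine sum_congr rfl fun P hP => ?_
    rw [mem_irr] at hP
    rw [← sum_filter, sum_const, nsmul_eq_mul]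
    push_cast
    congr 2
    have : (Icc 1 n).filter (fun j => P ^ j ∣ f) = Icc 1 ((normalizedFactors f).count P) := by
      ext j
      simp only [mem_filter, mem_Icc]
      rw [hcount P hP.1.1 hP.2]
      constructor
      · rintro ⟨⟨a, b⟩, c⟩; exact ⟨a, c⟩
      · rintro ⟨a, c⟩
        refine ⟨⟨a, ?_⟩, c⟩
        have h5 := hdeg P hP.1.1 j ((hcount P hP.1.1 hP.2 j).mpr c)
        have := hP.2.natDegree_pos
        nlinarith
    rw [this]; simp
  have h4 : (n : ℂ) = ∑ x ∈ Icc 1 n ×ˢ Icc 1 n, ∑ P ∈ irr F x.1,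
      (if P ^ x.2 ∣ f then (x.1 : ℂ) else 0) := by
    rw [sum_product, ← sum_congr rfl h3]
    conv_lhs => rw [← hf.2, h1, h2]
    push_cast
    rfl
  rw [h4]
  rw [← Finset.sum_subset (s₁ := (Icc 1 n ×ˢ Icc 1 n).filter (fun x => x.1 * x.2 ≤ n))
    (filter_subset _ _)]
  · rw [← Finset.sum_fiberwise_of_maps_to (t := Icc 1 n) (g := fun x : ℕ × ℕ => x.1 * x.2)]
    · refine sum_congr rfl fun m hm => ?_
      refine sum_congr ?_ fun _ _ => rfl
      ext ⟨a, b⟩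
      simp only [mem_filter, mem_product, mem_Icc, Nat.mem_divisorsAntidiagonal] at hm ⊢
      constructor
      · rintro ⟨_, h⟩; exact ⟨h, by omega⟩
      · rintro ⟨h, _⟩
        have ha : 1 ≤ a := Nat.pos_of_ne_zero (by rintro rfl; omega)
        have hb : 1 ≤ b := Nat.pos_of_ne_zero (by rintro rfl; omega)
        refine ⟨⟨⟨⟨ha, ?_⟩, hb, ?_⟩, ?_⟩, h⟩ <;> nlinarith
    · rintro ⟨a, b⟩ h
      simp only [mem_filter, mem_product, mem_Icc] at h ⊢
      exact ⟨Nat.mul_pos h.1.1.1 h.1.2.1, h.2⟩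
  · rintro ⟨a, b⟩ hx hn
    refine sum_eq_zero fun P hP => if_neg fun hd => hn ?_
    rw [mem_irr] at hP
    have := hdeg P hP.1.1 _ hd
    rw [hP.1.2] at this
    exact mem_filter.mpr ⟨hx, this⟩

theorem newton (ψ : MulChar F ℂ) (χ : AddChar F ℂ) (n : ℕ) :
    n * S ψ χ n = ∑ m ∈ Icc 1 n, T ψ χ m * S ψ χ (n - m) := by
  classical
  conv_lhs => unfold S
  rw [mul_sum]
  have h1 : ∀ f ∈ mon F n, (n : ℂ) * lam ψ χ f = ∑ m ∈ Icc 1 n, ∑ x ∈ m.divisorsAntidiagonal,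
      ∑ P ∈ irr F x.1, (x.1 : ℂ) * (if P ^ x.2 ∣ f then lam ψ χ f else 0) := by
    intro f hf
    conv_lhs => rw [natDegree_eq_sum hf]
    simp only [sum_mul]
    refine sum_congr rfl fun m _ => sum_congr rfl fun x _ => sum_congr rfl fun P _ => ?_
    split_ifs <;> simp
  rw [sum_congr rfl h1, sum_comm]
  refine sum_congr rfl fun m hm => ?_
  unfold T
  rw [sum_comm, sum_mul]
  refine sum_congr rfl fun x hx => ?_
  rw [sum_comm, sum_mul]
  refine sum_congr rfl fun P hP => ?_
  rw [mem_irr] at hP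
  rw [Nat.mem_divisorsAntidiagonal] at hx
  rw [← mul_sum, sum_dvd ψ χ (mem_Icc.mp hm).2 (hP.1.1.pow x.2), lam_pow ψ χ hP.1.1, mul_assoc]
  rw [hP.1.1.natDegree_pow, hP.1.2, mul_comm, hx.1]

theorem T_eq [Fintype F] (ψ : MulChar F ℂ) (χ : AddChar F ℂ) (hχ : χ ≠ 1) (n : ℕ) :
    T ψ χ (n + 1) = (-1) ^ n * gaussSum ψ χ ^ (n + 1) := by
  induction n with
  | zero =>
    have := newton ψ χ 1
    simp [S_zero, S_one] at this
    simp [this]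
  | succ n ih =>
    have h := newton ψ χ (n + 2)
    rw [S_eq_zero ψ χ hχ (by omega), mul_zero, Finset.sum_Icc_succ_top (by omega),
      Finset.sum_Icc_succ_top (by omega), Finset.sum_eq_zero] at h
    · have e1 : n + 2 - (n + 1) = 1 := by omega
      rw [e1] at h
      simp only [Nat.sub_self, S_zero, S_one, ih] at h
      linear_combination -h
    · intro m hm
      rw [mem_Icc] at hm
      rw [S_eq_zero ψ χ hχ (by omega), mul_zero]
end lam
end HD

namespace HD
open Polynomial Finset

theorem sum_mulChar {K : Type*} [Field K] [Fintype K] [Fintype (MulChar K ℂ)] [DecidableEq K] (a : K) :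
    ∑ ψ : MulChar K ℂ, ψ a = if a = 1 then ((Fintype.card K - 1 : ℕ) : ℂ) else 0 := by
  split_ifs with ha
  · subst ha
    have := MulChar.card_eq_card_units_of_hasEnoughRootsOfUnity K ℂ
    simp only [map_one, sum_const, card_univ, nsmul_eq_mul, mul_one]
    rw [← Nat.card_eq_fintype_card, this, Nat.card_eq_fintype_card, Fintype.card_units]
  · obtain ⟨χ, hχ⟩ := MulChar.exists_apply_ne_one_of_hasEnoughRootsOfUnity K ℂ ha
    refine eq_zero_of_mul_eq_self_left hχ ?_
    simp only [Finset.mul_sum, ← MulChar.mul_apply]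
    exact Fintype.sum_bijective _ (Group.mulLeft_bijective χ) _ _ fun χ' ↦ rfl

theorem sum_pow {K L : Type*} [Field K] [Field L] [Algebra K L] [Fintype K] [Fintype L]
    [DecidableEq L] [DecidableEq K] (g : Lˣ → ℂ) :
    ∑ x : Lˣ, g (x ^ (Fintype.card K - 1)) =
      ∑ z : Lˣ, if Algebra.norm K (z : L) = 1 then ((Fintype.card K - 1 : ℕ) : ℂ) * g z else 0 := by
  set φ : Lˣ →* Lˣ := powMonoidHom (Fintype.card K - 1) with hφ
  set N : Lˣ →* Kˣ := Units.map (Algebra.norm K (S := L)) with hN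
  have hsurj : Function.Surjective N := FiniteField.unitsMap_norm_surjective K L
  have hcK : Nat.card Kˣ = Fintype.card K - 1 := by
    rw [Nat.card_eq_fintype_card, Fintype.card_units]
  have hpos : 0 < Nat.card Kˣ := Nat.card_pos
  have hidx : Nat.card N.ker * Nat.card Kˣ = Nat.card Lˣ := by
    have := Subgroup.card_mul_index N.ker
    rwa [Subgroup.index_ker, MonoidHom.range_eq_top.mpr hsurj, Subgroup.card_top] at this
  have hgcd : (Nat.card Lˣ).gcd (Fintype.card K - 1) = Fintype.card K - 1 := by
    rw [← hcK]
    exact Nat.gcd_eq_right ⟨_, by rw [← hidx, mul_comm]⟩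
  have hker : Nat.card φ.ker = Fintype.card K - 1 := by
    rw [hφ, IsCyclic.card_powMonoidHom_ker, hgcd]
  have hle : φ.range ≤ N.ker := by
    rintro _ ⟨x, rfl⟩
    rw [MonoidHom.mem_ker, hφ, powMonoidHom_apply, map_pow, ← hcK, pow_card_eq_one']
  have hrange : φ.range = N.ker := by
    refine Subgroup.eq_of_le_of_card_ge hle ?_
    have h1 := Subgroup.card_mul_index φ.ker
    rw [Subgroup.index_ker, hker, ← hcK, ← hidx, mul_comm] at h1
    exact (Nat.eq_of_mul_eq_mul_right hpos h1).ge
  rw [← Finset.sum_fiberwise (s := univ) (g := φ)]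
  refine sum_congr rfl fun z _ => ?_
  have e1 : ∑ x ∈ univ.filter (fun x => φ x = z), g (x ^ (Fintype.card K - 1)) =
      ((univ.filter (fun x => φ x = z)).card : ℂ) * g z := by
    rw [← nsmul_eq_mul, ← sum_const]
    refine sum_congr rfl fun x hx => ?_
    rw [← (mem_filter.mp hx).2]; rfl
  rw [e1]
  have hz : Algebra.norm K (z : L) = 1 ↔ z ∈ φ.range := by
    rw [hrange, MonoidHom.mem_ker, Units.ext_iff]; rfl
  split_ifs with h
  · rw [hz] at h
    congr 2
    rw [MonoidHom.card_fiber_eq_of_mem_range φ (x := z) (y := 1) h ⟨1, map_one _⟩, ← hker,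
      Nat.card_eq_fintype_card, Fintype.card_subtype]
    congr 1
    ext x
    simp [MonoidHom.mem_ker]
  · rw [hz] at h
    have : univ.filter (fun x => φ x = z) = ∅ := by
      ext x
      simp only [mem_filter, mem_univ, true_and, notMem_empty, iff_false]
      exact fun hx => h ⟨x, hx⟩
    simp [this]
end HD

namespace HD
open Polynomial Finset

theorem card_roots {K L : Type*} [Field K] [Field L] [Algebra K L] [Fintype K] [Fintype L]
    [DecidableEq K[X]] {e : ℕ} (he : e ∣ Module.finrank K L) {P : K[X]} (hP : P ∈ irr K e) :
    (univ.filter (fun x : L => minpoly K x = P)).card = e := by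
  classical
  rw [mem_irr] at hP
  obtain ⟨⟨hm, hd⟩, hi⟩ := hP
  have hdvd : P ∣ X ^ (Nat.card K) ^ (Module.finrank K L) - X :=
    hi.natDegree_dvd_iff_dvd_X_pow_card_pow_sub_X.mp (hd ▸ he)
  rw [Nat.card_eq_fintype_card, ← Module.card_eq_pow_finrank] at hdvd
  have hsplit : (P.map (algebraMap K L)).Splits := by
    refine (FiniteField.isSplittingField_sub L K).splits.of_dvd ?_ (map_dvd (algebraMap K L) hdvd)
    exact map_ne_zero (FiniteField.X_pow_card_sub_X_ne_zero _ Fintype.one_lt_card)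
  have hsep : P.Separable := PerfectField.separable_of_irreducible hi
  have h1 : univ.filter (fun x : L => minpoly K x = P) = (P.aroots L).toFinset := by
    ext x
    simp only [mem_filter, mem_univ, true_and, Multiset.mem_toFinset, mem_aroots, hi.ne_zero,
      ne_eq, not_false_eq_true]
    constructor
    · rintro rfl; exact minpoly.aeval _ _
    · intro h; exact (minpoly.eq_of_irreducible_of_monic hi h hm).symm
  rw [h1, Multiset.toFinset_card_of_nodup (nodup_aroots_iff_of_splits hi.ne_zero hsplit |>.mpr hsep)]
  have := hsplit.natDegree_eq_card_roots
  rw [natDegree_map, hd] at this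
  exact this.symm

theorem lam_minpoly {K L : Type*} [Field K] [Field L] [Algebra K L] [Fintype K] [Fintype L]
    (ψ : MulChar K ℂ) (χ : AddChar K ℂ) (x : L) :
    lam ψ χ (minpoly K x) ^ (Module.finrank K L / (minpoly K x).natDegree) =
      ψ (Algebra.norm K x) * χ (Algebra.trace K L x) := by
  have hx : IsIntegral K x := .of_finite K x
  have hdeg : (minpoly K x).natDegree * Module.finrank (IntermediateField.adjoin K {x}) L
      = Module.finrank K L := by
    rw [← IntermediateField.adjoin.finrank hx, Module.finrank_mul_finrank]
  have hj : Module.finrank K L / (minpoly K x).natDegree =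
      Module.finrank (IntermediateField.adjoin K {x}) L := by
    rw [← hdeg, Nat.mul_div_cancel_left _ (minpoly.natDegree_pos hx)]
  rw [hj, trace_eq_trace_adjoin, trace_adjoinSimpleGen hx, Algebra.norm_eq_norm_adjoin]
  have hn := Algebra.PowerBasis.norm_gen_eq_coeff_zero_minpoly (IntermediateField.adjoin.powerBasis hx)
  rw [IntermediateField.adjoin.powerBasis_gen, IntermediateField.adjoin.powerBasis_dim,
    IntermediateField.minpoly_gen] at hn
  rw [hn, map_pow, AddChar.map_nsmul_eq_pow, ← mul_pow, lam, mul_comm]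

theorem sum_eq_T {K L : Type*} [Field K] [Field L] [Algebra K L] [Fintype K] [Fintype L]
    (ψ : MulChar K ℂ) (χ : AddChar K ℂ) :
    ∑ x : L, ψ (Algebra.norm K x) * χ (Algebra.trace K L x) = T ψ χ (Module.finrank K L) := by
  classical
  have hpos : 0 < Module.finrank K L := Module.finrank_pos
  unfold T
  rw [Nat.sum_divisorsAntidiagonal
    (f := fun e j => ∑ P ∈ irr K e, (e : ℂ) * lam ψ χ P ^ j)]
  rw [← Finset.sum_fiberwise_of_maps_to (t := (Module.finrank K L).divisors)
    (g := fun x : L => (minpoly K x).natDegree)]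
  · refine sum_congr rfl fun e he => ?_
    rw [Nat.mem_divisors] at he
    rw [← Finset.sum_fiberwise_of_maps_to (t := irr K e) (g := fun x : L => minpoly K x)]
    · refine sum_congr rfl fun P hP => ?_
      conv_rhs => rw [← card_roots (L := L) he.1 hP]
      rw [← nsmul_eq_mul, ← sum_const, filter_filter]
      have hPd := (mem_irr.mp hP).1.2
      refine sum_congr ?_ fun x hx => ?_
      · ext x
        simp only [mem_filter, mem_univ, true_and]
        constructor
        · exact fun h => h.2
        · intro h; exact ⟨h ▸ hPd, h⟩
      · simp only [mem_filter, mem_univ, true_and] at hx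
        rw [← lam_minpoly, hx, hPd, card_roots he.1 hP]
    · intro x hx
      rw [mem_irr]
      exact ⟨⟨minpoly.monic (.of_finite K x), (mem_filter.mp hx).2⟩,
        minpoly.irreducible (.of_finite K x)⟩
  · intro x _
    rw [Nat.mem_divisors]
    exact ⟨minpoly.degree_dvd (.of_finite K x), hpos.ne'⟩

theorem hasse_davenport {K L : Type*} [Field K] [Field L] [Algebra K L] [Fintype K] [Fintype L]
    (ψ : MulChar K ℂ) (χ : AddChar K ℂ) (hχ : χ ≠ 1) :
    ∑ x : L, ψ (Algebra.norm K x) * χ (Algebra.trace K L x) =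
      (-1) ^ (Module.finrank K L - 1) * gaussSum ψ χ ^ Module.finrank K L := by
  have hpos : 0 < Module.finrank K L := Module.finrank_pos
  obtain ⟨n, hn⟩ : ∃ n, Module.finrank K L = n + 1 := ⟨_, (Nat.sub_add_cancel hpos).symm⟩
  rw [sum_eq_T, hn, T_eq ψ χ hχ]
  simp

theorem main {K L : Type*} [Field K] [Field L] [Algebra K L] [Fintype K] [Fintype L]
    [DecidableEq L] (χ : AddChar K ℂ) (hχ : χ ≠ 1) (b : L) (hb : b ≠ 0) :
    ∑ x : Lˣ, χ (Algebra.trace K L (b * (x : L) ^ (Fintype.card K - 1))) =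
      (-1 : ℂ) ^ (Module.finrank K L - 1) * ∑ᶠ ψ : MulChar K ℂ,
        gaussSum ψ χ ^ Module.finrank K L * (starRingEnd ℂ) (ψ (Algebra.norm K b)) := by
  classical
  have := Fintype.ofFinite (MulChar K ℂ)
  rw [finsum_eq_sum_of_fintype, mul_sum]
  have hNb : Algebra.norm K b ≠ 0 := Algebra.norm_ne_zero_iff.mpr hb
  have h1 : ∀ ψ : MulChar K ℂ, (-1 : ℂ) ^ (Module.finrank K L - 1) *
      (gaussSum ψ χ ^ Module.finrank K L * (starRingEnd ℂ) (ψ (Algebra.norm K b))) =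
      ∑ z : Lˣ, ψ (Algebra.norm K (z : L)) * χ (Algebra.trace K L (b * z)) := by
    intro ψ
    rw [← mul_assoc, ← hasse_davenport ψ χ hχ]
    have hc : ψ (Algebra.norm K b) * (starRingEnd ℂ) (ψ (Algebra.norm K b)) = 1 := by
      rw [starRingEnd_apply, MulChar.star_apply', ← MulChar.mul_apply, mul_inv_cancel,
        MulChar.one_apply (Ne.isUnit hNb)]
    have h2 : ∑ x : L, ψ (Algebra.norm K x) * χ (Algebra.trace K L x) =
        ∑ x : L, ψ (Algebra.norm K (b * x)) * χ (Algebra.trace K L (b * x)) :=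
      (Fintype.sum_bijective _ (mulLeft_bijective₀ b hb) _ _ fun x => rfl).symm
    have h3 : ∑ z : Lˣ, ψ (Algebra.norm K (z : L)) * χ (Algebra.trace K L (b * z)) =
        ∑ x : L, ψ (Algebra.norm K x) * χ (Algebra.trace K L (b * x)) := by
      rw [← Finset.sum_subset (s₁ := univ.map ⟨((↑) : Lˣ → L), Units.val_injective⟩)
        (subset_univ _), sum_map]
      · rfl
      · intro x _ hx
        have : x = 0 := by
          by_contra h
          exact hx (mem_map.mpr ⟨Units.mk0 x h, mem_univ _, rfl⟩)
        rw [this, Algebra.norm_zero, MulChar.map_zero, zero_mul]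
    rw [h2, h3, sum_mul]
    refine sum_congr rfl fun x _ => ?_
    rw [map_mul, map_mul]
    linear_combination (ψ (Algebra.norm K x) * χ (Algebra.trace K L (b * x))) * hc
  rw [sum_congr rfl fun ψ _ => h1 ψ, sum_comm]
  have h4 := sum_pow (K := K) (L := L) (fun z => χ (Algebra.trace K L (b * (z : L))))
  simp only [Units.val_pow_eq_pow_val] at h4
  rw [h4]
  refine sum_congr rfl fun z _ => ?_
  rw [← sum_mul, sum_mulChar]
  split_ifs <;> simp
end HD

/-- Let `q` be a power of a prime `p` and `k, f` positive integers with
`f ∣ k`.  Let `χ₁` and `χ₂` be the canonical additive characters of `F_{q^f}` and `F_{q^k}`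
(hypotheses `hχ₁`, `hχ₂`).  Then for every `b ∈ F_{q^k}ˣ`,
`∑_{x ∈ F_{q^k}ˣ} χ₂(b x^{q^f-1}) = (-1)^{k/f-1} ∑_{ψ₁} G(ψ₁,χ₁)^{k/f} conj(ψ₁)(b^{(q^k-1)/(q^f-1)})`,
the sum running over all multiplicative characters `ψ₁` of `F_{q^f}`.
Here `b^{(q^k-1)/(q^f-1)}` is the norm of `b` from `Fk` to `Ff` (hypothesis `hnorm`). -/
theorem stmt2 (p e q f k : ℕ) [Fact p.Prime] (he : 0 < e) (hq : q = p ^ e)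
    (hf : 0 < f) (hk : 0 < k) (hfk : f ∣ k)
    (Fq Ff Fk : Type) [Field Fq] [Field Ff] [Field Fk]
    [Fintype Fq] [Fintype Ff] [Fintype Fk] [DecidableEq Fk]
    [Algebra Fq Ff] [Algebra Ff Fk]
    [Algebra (ZMod p) Ff] [Algebra (ZMod p) Fk]
    (hcq : Fintype.card Fq = q) (hcf : Fintype.card Ff = q ^ f)
    (hck : Fintype.card Fk = q ^ k)
    (hnorm : ∀ x : Fk,
      algebraMap Ff Fk (Algebra.norm Ff x) = x ^ ((q ^ k - 1) / (q ^ f - 1)))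
    (χ₁ : AddChar Ff ℂ)
    (hχ₁ : ∀ x : Ff, χ₁ x =
      Complex.exp (2 * Real.pi * Complex.I * ((Algebra.trace (ZMod p) Ff x).val : ℂ) / p))
    (χ₂ : AddChar Fk ℂ)
    (hχ₂ : ∀ x : Fk, χ₂ x =
      Complex.exp (2 * Real.pi * Complex.I * ((Algebra.trace (ZMod p) Fk x).val : ℂ) / p))
    (b : Fk) (hb : b ≠ 0) :
    ∑ x : Fkˣ, χ₂ (b * (x : Fk) ^ (q ^ f - 1))
      = (-1 : ℂ) ^ (k / f - 1) *
        ∑ᶠ ψ₁ : MulChar Ff ℂ,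
          gaussSum ψ₁ χ₁ ^ (k / f) * (starRingEnd ℂ) (ψ₁ (Algebra.norm Ff b)) := by
  have hcard : Fintype.card Fk = Fintype.card Ff ^ Module.finrank Ff Fk :=
    Module.card_eq_pow_finrank
  have hq1 : 1 < q := hq ▸ Nat.one_lt_pow he.ne' (Fact.out : p.Prime).one_lt
  have hfin : Module.finrank Ff Fk = k / f := by
    rw [hck, hcf, ← pow_mul] at hcard
    rw [Nat.pow_right_injective hq1 hcard, Nat.mul_div_cancel_left _ hf]
  have : IsScalarTower (ZMod p) Ff Fk := by
    refine IsScalarTower.of_algebraMap_eq' (Subsingleton.elim _ _)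
  have h12 : ∀ y : Fk, χ₂ y = χ₁ (Algebra.trace Ff Fk y) := by
    intro y
    rw [hχ₁, hχ₂, Algebra.trace_trace]
  have hne : χ₁ ≠ 1 := by
    intro h
    obtain ⟨a, ha⟩ := Algebra.trace_surjective (ZMod p) Ff 1
    have hp : 1 < p := (Fact.out : p.Prime).one_lt
    have : Fact (1 < p) := ⟨hp⟩
    have h2 := hχ₁ a
    rw [h, ha, ZMod.val_one, AddChar.one_apply, Nat.cast_one, mul_one] at h2
    exact (Complex.isPrimitiveRoot_exp p (by omega)).ne_one hp h2.symm
  rw [← hfin, ← HD.main χ₁ hne b hb, hcf]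
  exact Finset.sum_congr rfl fun x _ => h12 _
end

section
/- Let q be a power of a prime p, let k, f be positive integers with f | k and k > f > 1, and let D = {x ∈ F_{q^k}^* : Tr_{q^f/q}(x^{(q^k-1)/(q^f-1)}) = 0}. Then for every b ∈ F_{q^k}^*, the Hamming weight w(c_b) = #{d ∈ D : Tr_{q^k/q}(b d) ≠ 0} satisfies w(c_b) ≥ (q-1)(q^f - q)(q^{k-2} − q^{(k+f-4)/2})/(q^f - 1), and this lower bound is strictly positive; in particular every b ∈ F_{q^k}^* gives a nonzero codeword, so the code C_D has dimension k over F_q. -/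
@[to_additive]
lemma sum_hom_mul {A B : Type} [Group A] [Fintype A] [Group B] [Fintype B] (N : A →* B)
    (hN : Function.Surjective N) (g : B → ℝ) :
    (Fintype.card B : ℝ) * ∑ a, g (N a) = Fintype.card A * ∑ b, g b := by
  have h1 : ∑ b : B, ∑ a : A, g (N a * b) = Fintype.card B * ∑ a, g (N a) := by
    rw [← nsmul_eq_mul, ← Finset.card_univ, ← Finset.sum_const]
    refine Finset.sum_congr rfl fun b _ => ?_
    obtain ⟨a', rfl⟩ := hN b
    simp_rw [← map_mul]
    exact Equiv.sum_comp (Equiv.mulRight a') (fun a => g (N a))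
  rw [← h1, Finset.sum_comm, ← nsmul_eq_mul, ← Finset.card_univ, ← Finset.sum_const]
  refine Finset.sum_congr rfl fun a _ => ?_
  exact Equiv.sum_comp (Equiv.mulLeft (N a)) g

lemma cs_centered {A : Type} [Fintype A] [Nonempty A] (P G : A → ℝ) :
    (∑ a, P a * G a - (∑ a, P a) * (∑ a, G a) / Fintype.card A) ^ 2 ≤
    (∑ a, P a ^ 2 - (∑ a, P a) ^ 2 / Fintype.card A) *
    (∑ a, G a ^ 2 - (∑ a, G a) ^ 2 / Fintype.card A) := by
  have hn : (Fintype.card A : ℝ) ≠ 0 := by exact_mod_cast Fintype.card_ne_zero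
  have key : ∀ P G : A → ℝ, ∑ a, (P a - (∑ a, P a) / Fintype.card A) *
      (G a - (∑ a, G a) / Fintype.card A) =
      ∑ a, P a * G a - (∑ a, P a) * (∑ a, G a) / Fintype.card A := by
    intro P G
    simp_rw [sub_mul, mul_sub, Finset.sum_sub_distrib, ← Finset.sum_mul, ← Finset.mul_sum]
    simp only [Finset.sum_const, Finset.card_univ, nsmul_eq_mul]
    field_simp
    ring
  have h := Finset.sum_mul_sq_le_sq_mul_sq Finset.univ
    (fun a => P a - (∑ a, P a) / Fintype.card A) (fun a => G a - (∑ a, G a) / Fintype.card A)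
  simp only [key, pow_two] at h ⊢
  exact h

lemma cs_group {A : Type} [CommGroup A] [Fintype A] (H : Subgroup A) [Fintype H] (P E : A → ℝ)
    (hP : ∀ a, ∀ z : H, P (a * z) = P a) (hP2 : ∀ a, P a ^ 2 = P a) :
    ((Fintype.card H : ℝ) * ∑ a, P a * E a
      - (∑ a, P a) * (Fintype.card H * ∑ a, E a) / Fintype.card A) ^ 2 ≤
    (∑ a, P a - (∑ a, P a) ^ 2 / Fintype.card A) *
    (Fintype.card H * ∑ z : H, ∑ a, E a * E (a * z)
      - (Fintype.card H * ∑ a, E a) ^ 2 / Fintype.card A) := by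
  have h := cs_centered P (fun a => ∑ z : H, E (a * z))
  have e1 : ∑ a, P a * ∑ z : H, E (a * z) = Fintype.card H * ∑ a, P a * E a := by
    simp_rw [Finset.mul_sum]
    rw [Finset.sum_comm, ← Finset.mul_sum, ← nsmul_eq_mul, ← Finset.card_univ, ← Finset.sum_const]
    refine Finset.sum_congr rfl fun z _ => ?_
    rw [← Equiv.sum_comp (Equiv.mulRight (z : A)) (fun a => P a * E a)]
    simp [hP]
  have e2 : ∑ a, ∑ z : H, E (a * z) = Fintype.card H * ∑ a, E a := by
    rw [Finset.sum_comm, ← nsmul_eq_mul, ← Finset.card_univ, ← Finset.sum_const]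
    refine Finset.sum_congr rfl fun z _ => ?_
    exact Equiv.sum_comp (Equiv.mulRight (z : A)) E
  have e3 : ∑ a, (∑ z : H, E (a * z)) ^ 2 =
      Fintype.card H * ∑ z : H, ∑ a, E a * E (a * z) := by
    simp_rw [pow_two, Finset.sum_mul_sum]
    rw [Finset.sum_comm, ← nsmul_eq_mul, ← Finset.card_univ, ← Finset.sum_const]
    refine Finset.sum_congr rfl fun z _ => ?_
    rw [Finset.sum_comm, ← Equiv.sum_comp (Equiv.mulLeft z)]
    refine Finset.sum_congr rfl fun y _ => ?_
    rw [← Equiv.sum_comp (Equiv.mulRight (z : A)) (fun a => E a * E (a * y))]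
    simp [mul_assoc]
  rw [e1, e2, e3] at h
  simpa only [hP2] using h

open scoped Classical in
/-- The function q·1[t=0] - 1. -/
noncomputable def ep (F : Type) [Field F] [Fintype F] (t : F) : ℝ :=
  (Fintype.card F : ℝ) * (if t = 0 then 1 else 0) - 1

lemma ep_sum (F : Type) [Field F] [Fintype F] : ∑ t, ep F t = 0 := by
  unfold ep
  rw [Finset.sum_sub_distrib, ← Finset.mul_sum, Finset.sum_eq_single 0] <;> simp +contextual

lemma ep_sum_sq (F : Type) [Field F] [Fintype F] :
    ∑ t, ep F t ^ 2 = Fintype.card F * (Fintype.card F - 1) := by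
  have : ∀ t : F, ep F t ^ 2 = (Fintype.card F - 2) * ep F t + (Fintype.card F - 1) := by
    intro t; unfold ep; split_ifs <;> ring
  simp_rw [this, Finset.sum_add_distrib, ← Finset.mul_sum, ep_sum]
  simp
  ring

lemma ep_zero (F : Type) [Field F] [Fintype F] : ep F 0 = Fintype.card F - 1 := by simp [ep]

lemma ep_mul (F : Type) [Field F] [Fintype F] (c t : F) (hc : c ≠ 0) : ep F (c * t) = ep F t := by
  by_cases h : t = 0 <;> simp [ep, hc, h]

lemma sum_units {F : Type} [Field F] [Fintype F] [Fintype Fˣ] (g : F → ℝ) :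
    ∑ u : Fˣ, g u = ∑ x, g x - g 0 := by
  classical
  rw [← Finset.sum_erase_eq_sub (Finset.mem_univ 0)]
  refine Finset.sum_bij (fun u _ => (u : F)) ?_ ?_ ?_ ?_
  · intro u _; simp
  · intro a _ b _ h; exact Units.ext h
  · intro b hb; simp at hb; exact ⟨Units.mk0 b hb, by simp, rfl⟩
  · intros; rfl

section
variable {F L : Type} [Field F] [Fintype F] [Field L] [Fintype L] [Algebra F L]

lemma trace_sum (g : F → ℝ) :
    (Fintype.card F : ℝ) * ∑ x : L, g (Algebra.trace F L x) = Fintype.card L * ∑ t, g t :=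
  sum_hom_add (Algebra.trace F L).toAddMonoidHom (Algebra.trace_surjective F L) g

lemma card_pos' : (0 : ℝ) < Fintype.card F := by exact_mod_cast Fintype.card_pos

lemma tr_ep_sum : ∑ x : L, ep F (Algebra.trace F L x) = 0 := by
  have h := trace_sum (F := F) (L := L) (ep F)
  rw [ep_sum, mul_zero] at h
  exact (mul_eq_zero.1 h).resolve_left card_pos'.ne'

lemma tr_ep_sq (c : F) (hc : c ≠ 0) :
    ∑ x : L, ep F (Algebra.trace F L x) * ep F (Algebra.trace F L (x * algebraMap F L c)) =
    Fintype.card L * (Fintype.card F - 1) := by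
  have h := trace_sum (F := F) (L := L) (fun t => ep F t ^ 2)
  rw [ep_sum_sq] at h
  have e : ∀ x : L, ep F (Algebra.trace F L x) * ep F (Algebra.trace F L (x * algebraMap F L c))
      = ep F (Algebra.trace F L x) ^ 2 := by
    intro x
    rw [mul_comm x, ← Algebra.smul_def, map_smul, smul_eq_mul, ep_mul F _ _ hc, pow_two]
  simp_rw [e]
  have := (card_pos' (F := F)).ne'
  apply mul_left_cancel₀ this
  rw [h]; ring

lemma pair_surj (z : L) (hz : ∀ c : F, algebraMap F L c ≠ z) :
    Function.Surjective
      ((Algebra.trace F L).prod ((Algebra.trace F L).comp (LinearMap.mulRight F z))) := by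
  rw [← LinearMap.range_eq_top]
  by_contra hne
  obtain ⟨φ, hφ, hle⟩ := Submodule.exists_le_ker_of_lt_top _ (lt_top_iff_ne_top.2 hne)
  apply hφ
  set α := φ (1, 0) with hα
  set β := φ (0, 1) with hβ
  have hform : ∀ s t : F, φ (s, t) = s * α + t * β := by
    intro s t
    have : ((s, t) : F × F) = s • (1, 0) + t • (0, 1) := by simp
    rw [this, map_add, map_smul, map_smul, smul_eq_mul, smul_eq_mul]
  have h0 : ∀ u : L, Algebra.trace F L (u * (algebraMap F L α + algebraMap F L β * z)) = 0 := by
    intro u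
    have h1 : φ (Algebra.trace F L u, Algebra.trace F L (u * z)) = 0 :=
      hle ⟨u, rfl⟩
    rw [hform] at h1
    rw [← h1, mul_add, map_add]
    congr 1
    · rw [mul_comm u, ← Algebra.smul_def, map_smul, smul_eq_mul, mul_comm]
    · rw [mul_left_comm, ← Algebra.smul_def, map_smul, smul_eq_mul, mul_comm]
  have h2 : algebraMap F L α + algebraMap F L β * z = 0 := by
    by_contra hw
    obtain ⟨x, hx⟩ := Algebra.trace_surjective F L 1
    have := h0 (x * (algebraMap F L α + algebraMap F L β * z)⁻¹)
    rw [inv_mul_cancel_right₀ hw, hx] at this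
    exact one_ne_zero this
  have hβ0 : β = 0 := by
    by_contra hb
    apply hz (-α / β)
    have hb' : algebraMap F L β ≠ 0 := by simpa using hb
    rw [map_div₀, map_neg, div_eq_iff hb']
    linear_combination -h2
  have hα0 : α = 0 := by simpa [hβ0] using h2
  apply LinearMap.ext
  rintro ⟨s, t⟩
  simp [hform, hα0, hβ0]

lemma tr_ep_pair (z : L) (hz : ∀ c : F, algebraMap F L c ≠ z) :
    ∑ x : L, ep F (Algebra.trace F L x) * ep F (Algebra.trace F L (x * z)) = 0 := by
  have h := sum_hom_add (A := L) (B := F × F)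
    ((Algebra.trace F L).prod
      ((Algebra.trace F L).comp (LinearMap.mulRight F z))).toAddMonoidHom (pair_surj z hz)
    (fun p => ep F p.1 * ep F p.2)
  rw [Fintype.sum_prod_type] at h
  simp only [← Finset.mul_sum, ep_sum, mul_zero, Finset.sum_const_zero] at h
  have hc : (Fintype.card (F × F) : ℝ) ≠ 0 := by exact_mod_cast Fintype.card_ne_zero
  exact (mul_eq_zero.1 h).resolve_left hc
end

open scoped Classical in
/-- Indicator of trace zero norm. -/
noncomputable def ph (Fq Ff : Type) [Field Fq] [Field Ff] [Algebra Fq Ff] (y : Ff) : ℝ :=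
  if Algebra.trace Fq Ff y = 0 then 1 else 0

lemma ph_sum (Fq Ff : Type) [Field Fq] [Field Ff] [Algebra Fq Ff] [Fintype Fq] [Fintype Ff] :
    (Fintype.card Fq : ℝ) * ∑ y, ph Fq Ff y = Fintype.card Ff := by
  classical
  have h := trace_sum (F := Fq) (L := Ff) (fun t => if t = 0 then 1 else 0)
  simp only [Finset.sum_ite_eq', Finset.sum_ite_eq, Finset.mem_univ, if_true, mul_one] at h
  rw [← h]
  simp [ph]

lemma card_units_real (F : Type) [Field F] [Fintype F] [Fintype Fˣ] :
    (Fintype.card Fˣ : ℝ) = Fintype.card F - 1 := by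
  classical
  rw [← Nat.card_eq_fintype_card, Nat.card_units, Nat.card_eq_fintype_card, Nat.cast_sub Fintype.card_pos, Nat.cast_one]

section
variable (Fq Ff Fk : Type) [Field Fq] [Field Ff] [Field Fk]
    [Fintype Fq] [Fintype Ff] [Fintype Fk]
    [Fintype Fqˣ] [Fintype Ffˣ] [Fintype Fkˣ]
    [Algebra Fq Ff] [Algebra Ff Fk] [Algebra Fq Fk] [IsScalarTower Fq Ff Fk]

/-- Elements whose norm lies in the small field. -/
noncomputable def HH : Subgroup Fkˣ :=
  (MonoidHom.range (Units.map (algebraMap Fq Ff).toMonoidHom)).comap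
    (Units.map (Algebra.norm Ff (S := Fk)))

lemma mem_HH (z : Fkˣ) : z ∈ HH Fq Ff Fk ↔
    ∃ c : Fqˣ, algebraMap Fq Ff c = Algebra.norm Ff (z : Fk) := by
  simp [HH, Units.ext_iff]

lemma card_HH [Fintype (HH Fq Ff Fk)] :
    ((Fintype.card Ff : ℝ) - 1) * Fintype.card (HH Fq Ff Fk) =
      (Fintype.card Fk - 1) * (Fintype.card Fq - 1) := by
  classical
  set R := MonoidHom.range (Units.map (algebraMap Fq Ff).toMonoidHom) with hR
  have h := sum_hom_mul (Units.map (Algebra.norm Ff (S := Fk)))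
    (FiniteField.unitsMap_norm_surjective Ff Fk) (fun y => if y ∈ R then (1 : ℝ) else 0)
  rw [card_units_real, card_units_real] at h
  have e1 : ∑ a : Fkˣ, (if Units.map (Algebra.norm Ff (S := Fk)) a ∈ R then (1 : ℝ) else 0)
      = Fintype.card (HH Fq Ff Fk) := by
    rw [Finset.sum_boole]
    congr 1
    symm
    apply Fintype.card_of_subtype
    intro x
    rw [Finset.mem_filter_univ]
    rfl
  have e2 : ∑ y : Ffˣ, (if y ∈ R then (1 : ℝ) else 0) = Fintype.card Fq - 1 := by
    rw [Finset.sum_boole, ← Fintype.card_subtype, ← card_units_real]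
    congr 1
    symm
    apply Fintype.card_congr
    exact (MonoidHom.ofInjective (f := Units.map (algebraMap Fq Ff).toMonoidHom)
      (Units.map_injective (algebraMap Fq Ff).injective)).toEquiv
  rw [e1, e2] at h
  exact h

lemma card_DD : ((Fintype.card Ff : ℝ) - 1) *
    ((Fintype.card Fq : ℝ) * ∑ a : Fkˣ, ph Fq Ff (Algebra.norm Ff (a : Fk))) =
      (Fintype.card Fk - 1) * (Fintype.card Ff - Fintype.card Fq) := by
  classical
  have h := sum_hom_mul (Units.map (Algebra.norm Ff (S := Fk)))
    (FiniteField.unitsMap_norm_surjective Ff Fk) (fun y => ph Fq Ff y)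
  rw [card_units_real, card_units_real, sum_units (ph Fq Ff)] at h
  have h2 := ph_sum Fq Ff
  have h3 : ph Fq Ff 0 = 1 := by simp [ph]
  simp only [Units.coe_map, MonoidHom.coe_coe] at h
  rw [h3] at h
  linear_combination (Fintype.card Fq : ℝ) * h + ((Fintype.card Fk : ℝ) - 1) * h2

lemma corr (b z : Fkˣ) :
    ∑ a : Fkˣ, ep Fq (Algebra.trace Fq Fk (b * a)) * ep Fq (Algebra.trace Fq Fk (b * (a * z))) =
    ∑ x : Fk, ep Fq (Algebra.trace Fq Fk x) * ep Fq (Algebra.trace Fq Fk (x * z)) -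
      ((Fintype.card Fq : ℝ) - 1) ^ 2 := by
  have h1 := Equiv.sum_comp (Equiv.mulLeft b) (fun a : Fkˣ =>
    ep Fq (Algebra.trace Fq Fk a) * ep Fq (Algebra.trace Fq Fk (a * z)))
  have h2 := sum_units (fun x : Fk =>
    ep Fq (Algebra.trace Fq Fk x) * ep Fq (Algebra.trace Fq Fk (x * z)))
  simp only [Equiv.coe_mulLeft, Units.val_mul, mul_assoc] at h1
  rw [h1, h2]
  simp [ep_zero, pow_two]

lemma sum_one (b : Fkˣ) :
    ∑ a : Fkˣ, ep Fq (Algebra.trace Fq Fk (b * a)) = -((Fintype.card Fq : ℝ) - 1) := by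
  have h1 := Equiv.sum_comp (Equiv.mulLeft b) (fun a : Fkˣ => ep Fq (Algebra.trace Fq Fk a))
  have h2 := sum_units (fun x : Fk => ep Fq (Algebra.trace Fq Fk x))
  simp only [Equiv.coe_mulLeft, Units.val_mul] at h1
  rw [h1, h2, tr_ep_sum]
  simp [ep_zero]

lemma sum_corr (b : Fkˣ) [Fintype (HH Fq Ff Fk)] :
    ∑ z : HH Fq Ff Fk, ∑ a : Fkˣ, ep Fq (Algebra.trace Fq Fk (b * a)) *
      ep Fq (Algebra.trace Fq Fk (b * (a * ((z : Fkˣ) : Fk)))) =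
    ((Fintype.card Fq : ℝ) - 1) ^ 2 * (Fintype.card Fk - Fintype.card (HH Fq Ff Fk)) := by
  classical
  simp_rw [corr Fq Fk b, Finset.sum_sub_distrib]
  have key : ∀ z : HH Fq Ff Fk, ∑ x : Fk, ep Fq (Algebra.trace Fq Fk x) *
      ep Fq (Algebra.trace Fq Fk (x * ((z : Fkˣ) : Fk))) =
      ∑ c : Fqˣ, if algebraMap Fq Fk c = ((z : Fkˣ) : Fk) then
        (Fintype.card Fk : ℝ) * (Fintype.card Fq - 1) else 0 := by
    intro z
    by_cases hz : ∃ c : Fq, algebraMap Fq Fk c = ((z : Fkˣ) : Fk)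
    · obtain ⟨c, hc⟩ := hz
      have hc0 : c ≠ 0 := by
        rintro rfl
        rw [map_zero] at hc
        exact (z : Fkˣ).ne_zero hc.symm
      rw [Finset.sum_eq_single (Units.mk0 c hc0)]
      · rw [← hc, tr_ep_sq c hc0]; simp
      · intro d _ hd
        rw [if_neg]
        intro h
        apply hd
        rw [← hc] at h
        exact Units.ext ((algebraMap Fq Fk).injective h)
      · simp
    · push Not at hz
      rw [tr_ep_pair _ hz]
      symm
      exact Finset.sum_eq_zero fun c _ => if_neg (hz c)
  simp_rw [key]
  rw [Finset.sum_comm]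
  have key2 : ∀ c : Fqˣ, (∑ z : HH Fq Ff Fk, if algebraMap Fq Fk c = ((z : Fkˣ) : Fk) then
        (Fintype.card Fk : ℝ) * (Fintype.card Fq - 1) else 0) =
        (Fintype.card Fk : ℝ) * (Fintype.card Fq - 1) := by
    intro c
    have hm : Units.map (algebraMap Fq Fk).toMonoidHom c ∈ HH Fq Ff Fk := by
      rw [mem_HH]
      refine ⟨c ^ Module.finrank Ff Fk, ?_⟩
      have : ((Units.map (algebraMap Fq Fk).toMonoidHom c : Fkˣ) : Fk) =
        algebraMap Ff Fk (algebraMap Fq Ff c) := by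
        rw [← IsScalarTower.algebraMap_apply]; rfl
      rw [this, Algebra.norm_algebraMap]
      simp
    rw [Finset.sum_eq_single ⟨_, hm⟩]
    · simp
    · intro d _ hd
      rw [if_neg]
      intro h
      apply hd
      apply Subtype.ext
      apply Units.ext
      exact h.symm
    · simp
  simp_rw [key2]
  simp only [Finset.sum_const, Finset.card_univ, nsmul_eq_mul, card_units_real]
  ring

lemma main_ineq (b : Fkˣ) [Fintype (HH Fq Ff Fk)] :
    ((Fintype.card (HH Fq Ff Fk) : ℝ) * ∑ a : Fkˣ, ph Fq Ff (Algebra.norm Ff (a : Fk)) *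
        ep Fq (Algebra.trace Fq Fk (b * a))
      - (∑ a : Fkˣ, ph Fq Ff (Algebra.norm Ff (a : Fk))) *
        (Fintype.card (HH Fq Ff Fk) * -((Fintype.card Fq : ℝ) - 1)) / (Fintype.card Fk - 1)) ^ 2 ≤
    (∑ a : Fkˣ, ph Fq Ff (Algebra.norm Ff (a : Fk)) -
      (∑ a : Fkˣ, ph Fq Ff (Algebra.norm Ff (a : Fk))) ^ 2 / (Fintype.card Fk - 1)) *
    (Fintype.card (HH Fq Ff Fk) * (((Fintype.card Fq : ℝ) - 1) ^ 2 *
        (Fintype.card Fk - Fintype.card (HH Fq Ff Fk)))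
      - (Fintype.card (HH Fq Ff Fk) * -((Fintype.card Fq : ℝ) - 1)) ^ 2
        / (Fintype.card Fk - 1)) := by
  classical
  have h := cs_group (HH Fq Ff Fk) (fun a : Fkˣ => ph Fq Ff (Algebra.norm Ff (a : Fk)))
    (fun a : Fkˣ => ep Fq (Algebra.trace Fq Fk (b * a))) ?_ ?_
  · simp only [Units.val_mul] at h
    rw [sum_one, sum_corr, card_units_real] at h
    exact h
  · intro a z
    obtain ⟨c, hc⟩ := (mem_HH Fq Ff Fk z).1 z.2
    simp only [Units.val_mul, map_mul, ← hc]
    rw [mul_comm, ← Algebra.smul_def]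
    simp [ph]
  · intro a
    by_cases h : Algebra.trace Fq Ff (Algebra.norm Ff (a : Fk)) = 0 <;> simp [ph, h]

lemma weight_eq (b : Fkˣ) :
    (Fintype.card Fq : ℝ) *
      (Nat.card {d : Fk // (d ≠ 0 ∧ Algebra.trace Fq Ff (Algebra.norm Ff d) = 0) ∧
            Algebra.trace Fq Fk (b * d) ≠ 0} : ℝ) =
    (Fintype.card Fq - 1) * ∑ a : Fkˣ, ph Fq Ff (Algebra.norm Ff (a : Fk)) -
      ∑ a : Fkˣ, ph Fq Ff (Algebra.norm Ff (a : Fk)) * ep Fq (Algebra.trace Fq Fk (b * a)) := by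
  classical
  have h1 : (Nat.card {d : Fk // (d ≠ 0 ∧ Algebra.trace Fq Ff (Algebra.norm Ff d) = 0) ∧
            Algebra.trace Fq Fk (b * d) ≠ 0} : ℝ) =
      ∑ x : Fk, if ((x ≠ 0 ∧ Algebra.trace Fq Ff (Algebra.norm Ff x) = 0) ∧
            Algebra.trace Fq Fk (b * x) ≠ 0) then (1 : ℝ) else 0 := by
    rw [Nat.card_eq_fintype_card, Fintype.card_subtype, Finset.sum_boole]
  have h2 := sum_units (fun x : Fk => if ((x ≠ 0 ∧ Algebra.trace Fq Ff (Algebra.norm Ff x) = 0) ∧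
            Algebra.trace Fq Fk (b * x) ≠ 0) then (1 : ℝ) else 0)
  simp only [ne_eq, not_true_eq_false, false_and, if_false, sub_zero] at h2
  rw [h1, ← h2, Finset.mul_sum, Finset.mul_sum, ← Finset.sum_sub_distrib]
  refine Finset.sum_congr rfl fun a _ => ?_
  have ha : (a : Fk) ≠ 0 := a.ne_zero
  by_cases h3 : Algebra.trace Fq Ff (Algebra.norm Ff (a : Fk)) = 0 <;>
  by_cases h4 : Algebra.trace Fq Fk (b * a) = 0 <;> simp [ph, ep, h3, h4, ha]
end

/-- The purely arithmetic conclusion; `h` is the order of the subgroup, `D` the length. -/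
lemma arith (q Q K h D T r : ℝ) (hq : 1 < q) (hQ : q < Q) (hK : Q < K) (hr : 0 ≤ r)
    (hr2 : r ^ 2 = K * Q)
    (hh : (Q - 1) * h = (K - 1) * (q - 1)) (hD : (Q - 1) * (q * D) = (K - 1) * (Q - q))
    (H : (h * T - D * (h * -(q - 1)) / (K - 1)) ^ 2 ≤
      (D - D ^ 2 / (K - 1)) * (h * ((q - 1) ^ 2 * (K - h)) - (h * -(q - 1)) ^ 2 / (K - 1))) :
    (q - 1) * (Q - q) * (K - r) / (Q - 1) ≤ q * ((q - 1) * D - T) := by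
  have q1 : 0 < q - 1 := by linarith
  have Q1 : 0 < Q - 1 := by linarith
  have K1 : 0 < K - 1 := by linarith
  have q0 : 0 < q := by linarith
  have hh' : h = (K - 1) * (q - 1) / (Q - 1) := by rw [eq_div_iff Q1.ne']; linarith
  have hD' : D = (K - 1) * (Q - q) / ((Q - 1) * q) := by
    rw [eq_div_iff (by positivity)]; linarith
  have hpos : 0 < h := by rw [hh']; positivity
  set s := (Q - q) / ((Q - 1) * q) with hs
  have hs0 : 0 ≤ s := div_nonneg (by linarith) (by positivity)
  have E1 : (h * T - D * (h * -(q - 1)) / (K - 1)) ^ 2 = h ^ 2 * (T + s * (q - 1)) ^ 2 := by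
    rw [hD', hs]; field_simp; ring
  have E2 : (D - D ^ 2 / (K - 1)) * (h * ((q - 1) ^ 2 * (K - h)) - (h * -(q - 1)) ^ 2 / (K - 1))
      = h ^ 2 * (s ^ 2 * (q - 1) ^ 2 * (K * Q)) := by
    rw [hD', hs, hh']; field_simp; ring
  rw [E1, E2, ← hr2] at H
  have H2 := le_of_mul_le_mul_left H (by positivity)
  have H3 : T + s * (q - 1) ≤ s * (q - 1) * r := by
    apply abs_le_of_sq_le_sq' _ (by positivity) |>.2
    linarith [H2]
  have E3 : (q - 1) * (Q - q) * (K - r) / (Q - 1) = q * ((q - 1) * D - (s * (q - 1) * r - s * (q - 1))) := by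
    rw [hD', hs]; field_simp; ring
  rw [E3]
  apply mul_le_mul_of_nonneg_left _ q0.le
  linarith

/-- **Theorem 1, bound.** Let `q` be a power of a prime `p`, `f ∣ k`,
`k > f > 1`, and `D = {x ∈ F_{q^k}ˣ : Tr_{q^f/q}(x^{(q^k-1)/(q^f-1)}) = 0}`.  Then for
every `b ∈ F_{q^k}ˣ` the Hamming weight `w(c_b) = #{d ∈ D : Tr_{q^k/q}(bd) ≠ 0}`
satisfies `w(c_b) ≥ (q-1)(q^f-q)(q^{k-2} − q^{(k+f-4)/2})/(q^f-1)`, this lower bound is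
strictly positive, and consequently `b ↦ c_b` is injective, so `C_D` has dimension `k`. -/
theorem stmt5 (p e q f k : ℕ) [Fact p.Prime] (he : 0 < e) (hq : q = p ^ e)
    (hf : 1 < f) (hk : f < k) (hfk : f ∣ k)
    (Fq Ff Fk : Type) [Field Fq] [Field Ff] [Field Fk]
    [Fintype Fq] [Fintype Ff] [Fintype Fk]
    [Algebra Fq Ff] [Algebra Ff Fk] [Algebra Fq Fk] [IsScalarTower Fq Ff Fk]
    (hcq : Fintype.card Fq = q) (hcf : Fintype.card Ff = q ^ f)
    (hck : Fintype.card Fk = q ^ k)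
    (hnorm : ∀ x : Fk,
      algebraMap Ff Fk (Algebra.norm Ff x) = x ^ ((q ^ k - 1) / (q ^ f - 1))) :
    (0 : ℝ) < ((q : ℝ) - 1) * ((q : ℝ) ^ f - q) *
        ((q : ℝ) ^ (k - 2) - (q : ℝ) ^ (((k : ℝ) + f - 4) / 2)) / ((q : ℝ) ^ f - 1) ∧
    (∀ b : Fk, b ≠ 0 →
      ((q : ℝ) - 1) * ((q : ℝ) ^ f - q) *
          ((q : ℝ) ^ (k - 2) - (q : ℝ) ^ (((k : ℝ) + f - 4) / 2)) / ((q : ℝ) ^ f - 1)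
        ≤ (Nat.card {d : Fk // (d ≠ 0 ∧ Algebra.trace Fq Ff (Algebra.norm Ff d) = 0) ∧
            Algebra.trace Fq Fk (b * d) ≠ 0} : ℝ)) ∧
    (∀ b : Fk, b ≠ 0 → ∃ d : Fk,
      (d ≠ 0 ∧ Algebra.trace Fq Ff (Algebra.norm Ff d) = 0) ∧
        Algebra.trace Fq Fk (b * d) ≠ 0) ∧
    Function.Injective
      (fun (b : Fk) (d : {x : Fk // x ≠ 0 ∧ Algebra.trace Fq Ff (Algebra.norm Ff x) = 0}) =>
        Algebra.trace Fq Fk (b * (d : Fk))) := by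
  classical
  have hp : 2 ≤ p := (Fact.out : p.Prime).two_le
  have hq2 : 1 < q := by rw [hq]; exact Nat.one_lt_pow he.ne' hp
  have q1 : (1 : ℝ) < q := by exact_mod_cast hq2
  have q0 : (0 : ℝ) < q := by linarith
  have hQ : (q : ℝ) < (q : ℝ) ^ f := lt_self_pow₀ q1 hf
  have hK : (q : ℝ) ^ f < (q : ℝ) ^ k := pow_lt_pow_right₀ q1 hk
  set r : ℝ := (q : ℝ) ^ (((k : ℝ) + f) / 2) with hr
  have r0 : 0 ≤ r := by positivity
  have hr2 : r ^ 2 = (q : ℝ) ^ k * (q : ℝ) ^ f := by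
    rw [hr, ← Real.rpow_natCast (_ ^ _), ← Real.rpow_mul q0.le, ← pow_add,
      ← Real.rpow_natCast (q : ℝ) (k + f)]
    congr 1
    push_cast
    ring
  have hrK : r < (q : ℝ) ^ k := by
    apply lt_of_pow_lt_pow_left₀ 2 (by positivity)
    rw [hr2, pow_two]
    exact mul_lt_mul_of_pos_left hK (by positivity)
  have e1 : (q : ℝ) ^ (k - 2) = (q : ℝ) ^ k / q ^ 2 := by
    rw [eq_div_iff (by positivity), ← pow_add]
    congr 1
    omega
  have e2 : (q : ℝ) ^ (((k : ℝ) + f - 4) / 2) = r / q ^ 2 := by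
    rw [hr, ← Real.rpow_natCast (q : ℝ) 2, ← Real.rpow_sub q0]
    congr 1
    push_cast
    ring
  have hB : ((q : ℝ) - 1) * ((q : ℝ) ^ f - q) *
        ((q : ℝ) ^ (k - 2) - (q : ℝ) ^ (((k : ℝ) + f - 4) / 2)) / ((q : ℝ) ^ f - 1) =
      ((q : ℝ) - 1) * ((q : ℝ) ^ f - q) * ((q : ℝ) ^ k - r) / ((q : ℝ) ^ f - 1) / q ^ 2 := by
    rw [e1, e2]
    ring
  have hpos : (0 : ℝ) < ((q : ℝ) - 1) * ((q : ℝ) ^ f - q) *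
        ((q : ℝ) ^ (k - 2) - (q : ℝ) ^ (((k : ℝ) + f - 4) / 2)) / ((q : ℝ) ^ f - 1) := by
    rw [hB]
    have a1 : 0 < (q : ℝ) - 1 := by linarith
    have a2 : 0 < (q : ℝ) ^ f - q := by linarith
    have a3 : 0 < (q : ℝ) ^ k - r := by linarith
    have a4 : 0 < (q : ℝ) ^ f - 1 := by linarith
    positivity
  have hbound : ∀ b : Fk, b ≠ 0 →
      ((q : ℝ) - 1) * ((q : ℝ) ^ f - q) *
          ((q : ℝ) ^ (k - 2) - (q : ℝ) ^ (((k : ℝ) + f - 4) / 2)) / ((q : ℝ) ^ f - 1)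
        ≤ (Nat.card {d : Fk // (d ≠ 0 ∧ Algebra.trace Fq Ff (Algebra.norm Ff d) = 0) ∧
            Algebra.trace Fq Fk (b * d) ≠ 0} : ℝ) := by
    intro b hb
    have w := weight_eq Fq Ff Fk (Units.mk0 b hb)
    have m := main_ineq Fq Ff Fk (Units.mk0 b hb)
    have c1 := card_HH Fq Ff Fk
    have c2 := card_DD Fq Ff Fk
    have cq : (Fintype.card Fq : ℝ) = q := by rw [hcq]
    have cf : (Fintype.card Ff : ℝ) = (q : ℝ) ^ f := by rw [hcf]; push_cast; rfl
    have ck : (Fintype.card Fk : ℝ) = (q : ℝ) ^ k := by rw [hck]; push_cast; rfl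
    rw [cq, ck] at m
    rw [cf, ck, cq] at c1 c2
    rw [cq] at w
    have key := arith _ _ _ _ _ _ r q1 hQ hK r0 hr2 c1 c2 m
    rw [← w] at key
    rw [hB, div_le_iff₀ (by positivity)]
    refine key.trans (le_of_eq ?_)
    simp only [Units.val_mk0]
    ring
  have hex : ∀ b : Fk, b ≠ 0 → ∃ d : Fk,
      (d ≠ 0 ∧ Algebra.trace Fq Ff (Algebra.norm Ff d) = 0) ∧
        Algebra.trace Fq Fk (b * d) ≠ 0 := by
    intro b hb
    have h := hpos.trans_le (hbound b hb)
    have h' : 0 < Nat.card {d : Fk // (d ≠ 0 ∧ Algebra.trace Fq Ff (Algebra.norm Ff d) = 0) ∧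
            Algebra.trace Fq Fk (b * d) ≠ 0} := by exact_mod_cast h
    obtain ⟨⟨⟨d, hd⟩⟩, _⟩ := Nat.card_pos_iff.1 h'
    exact ⟨d, hd⟩
  refine ⟨hpos, hbound, hex, ?_⟩
  intro b b' h
  by_contra hne
  obtain ⟨d, hd, hd2⟩ := hex (b - b') (sub_ne_zero.2 hne)
  apply hd2
  have := congrFun h ⟨d, hd⟩
  simp only at this
  rw [sub_mul, map_sub, this, sub_self]
end

section
/- Let q be a power of a prime p, let k be a positive integer with k ≡ 0 (mod 4), and let D = {x ∈ F_{q^k}^* : Tr_{q^2/q}(x^{(q^k-1)/(q^2-1)}) = 0}. Then #{b ∈ F_{q^k}^* : w(c_b) = (q-1)(q^{k-1} − q^{k/2 - 1})/(q+1)} = q(q^k - 1)/(q+1) and #{b ∈ F_{q^k}^* : w(c_b) = (q-1)(q^{k-1} + q^{k/2})/(q+1)} = (q^k - 1)/(q+1); in particular every nonzero codeword of C_D has one of these two weights, and the minimum distance of C_D is (q-1)(q^{k-1} − q^{k/2-1})/(q+1). -/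
open Classical in
theorem aux_root {K : Type} [Field K] [Fintype K] (m n : ℕ) (h : m * n = Fintype.card K - 1)
    (hn : 0 < n) (u : K) (hu : u ≠ 0) (h1 : u ^ n = 1) : ∃ c : K, c ≠ 0 ∧ c ^ m = u := by
  obtain ⟨g, hg⟩ := IsCyclic.exists_generator (α := Kˣ)
  obtain ⟨i, hi⟩ := (mem_powers_iff_mem_zpowers.mpr (hg (Units.mk0 u hu)))
  have ho : orderOf g = m * n := by
    rw [orderOf_eq_card_of_forall_mem_zpowers hg, Nat.card_eq_fintype_card, Fintype.card_units, h]
  have h2 : g ^ (i * n) = 1 := by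
    rw [pow_mul]
    have : g ^ i = Units.mk0 u hu := hi
    rw [this]
    ext; simpa using h1
  have h3 : m * n ∣ i * n := ho ▸ orderOf_dvd_of_pow_eq_one h2
  obtain ⟨j, rfl⟩ := Nat.dvd_of_mul_dvd_mul_right hn h3
  refine ⟨(g ^ j : Kˣ), Units.ne_zero _, ?_⟩
  have : g ^ (m * j) = Units.mk0 u hu := hi
  rw [← Units.val_pow_eq_pow_val, ← pow_mul, mul_comm, this]; rfl

open Classical in
theorem aux_fiber {K : Type} [Field K] [Fintype K] (m : ℕ) (hm : m ∣ Fintype.card K - 1)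
    (P : K → Prop) :
    (Finset.univ.filter fun x : K => x ≠ 0 ∧ P (x ^ m)).card
      = m * (Finset.univ.filter fun y : K => (y ≠ 0 ∧ ∃ c, c ^ m = y) ∧ P y).card := by
  have hc : 0 < Fintype.card K - 1 := by have := Fintype.one_lt_card (α := K); omega
  have hm0 : 0 < m := Nat.pos_of_dvd_of_pos hm hc
  rw [Finset.card_eq_sum_card_fiberwise (f := fun x => x ^ m)
    (t := Finset.univ.filter fun y : K => (y ≠ 0 ∧ ∃ c, c ^ m = y) ∧ P y)]
  · rw [Finset.sum_const_nat (m := m), mul_comm]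
    intro y hy
    simp only [Finset.mem_filter, Finset.mem_univ, true_and] at hy
    obtain ⟨⟨hy0, c, rfl⟩, hP⟩ := hy
    have hc0 : c ≠ 0 := by rintro rfl; simp [hm0.ne'] at hy0
    have hk := IsCyclic.card_powMonoidHom_ker (G := Kˣ) m
    rw [Nat.card_eq_fintype_card, Nat.card_eq_fintype_card, Fintype.card_units, Nat.gcd_eq_right hm] at hk
    refine Eq.trans ?_ hk
    rw [← Finset.card_univ]
    symm
    refine Finset.card_bij (fun u _ => c * ((u : Kˣ) : K)) ?_ ?_ ?_
    · intro u _
      have hu : (u : Kˣ) ^ m = 1 := u.2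
      have hu' : ((u : Kˣ) : K) ^ m = 1 := by rw [← Units.val_pow_eq_pow_val, hu]; rfl
      simp [mul_pow, hu', hc0, hP]
    · intro u _ v _ huv
      exact Subtype.ext (Units.ext (mul_left_cancel₀ hc0 huv))
    · intro x hx
      simp only [Finset.mem_filter, Finset.mem_univ, true_and] at hx
      have hx0 := hx.1.1
      refine ⟨⟨Units.mk0 (x / c) (div_ne_zero hx0 hc0), ?_⟩, Finset.mem_univ _, ?_⟩
      · rw [MonoidHom.mem_ker]
        ext
        simp [div_pow, hx.2, hc0]
      · simp; field_simp
  · intro x hx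
    simp only [Finset.coe_filter, Finset.mem_univ, true_and, Set.mem_ofPred_eq] at hx ⊢
    exact ⟨⟨pow_ne_zero _ hx.1, x, rfl⟩, hx.2⟩

theorem aux_frob {F K : Type} [Field F] [Field K] [Fintype F] [Fintype K] [Algebra F K]
    (x y : K) : (x + y) ^ Fintype.card F = x ^ Fintype.card F + y ^ Fintype.card F :=
  map_add (FiniteField.frobeniusAlgHom F K) x y

theorem aux_trfrob {F K : Type} [Field F] [Field K] [Fintype F] [Fintype K] [Algebra F K]
    (x : K) : Algebra.trace F K (x ^ Fintype.card F) = Algebra.trace F K x :=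
  Algebra.trace_eq_of_algEquiv (FiniteField.frobeniusAlgEquivOfAlgebraic F K) x

theorem aux_tr0 {F K : Type} [Field F] [Field K] [Fintype F] [Fintype K] [Algebra F K]
    (hk : Even (Module.finrank F K)) (t : K) (ht : t + t ^ Fintype.card F = 0) :
    Algebra.trace F K t = 0 := by
  apply (algebraMap F K).injective
  rw [FiniteField.algebraMap_trace_eq_sum_pow, map_zero, Nat.card_eq_fintype_card]
  set q := Fintype.card F
  have h1 : t ^ q = -t := by linear_combination ht
  have hneg : (-t) ^ q = t := by
    have := aux_frob (F := F) t (-t)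
    rw [add_neg_cancel, zero_pow Fintype.card_ne_zero] at this
    change 0 = t ^ q + (-t) ^ q at this
    linear_combination -this - ht
  have h2 : ∀ i, t ^ (q ^ (2 * i)) = t := by
    intro i
    induction i with
    | zero => simp
    | succ i ih =>
      rw [show 2 * (i + 1) = 2 * i + 1 + 1 by ring, pow_succ, pow_succ, pow_mul, pow_mul, ih, h1, hneg]
  obtain ⟨r, hr⟩ := hk
  rw [hr]
  clear hr
  induction r with
  | zero => simp
  | succ r ih =>
    rw [show r + 1 + (r + 1) = (r + r) + 1 + 1 by ring, Finset.sum_range_succ,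
      Finset.sum_range_succ, ih, ← two_mul, pow_succ, pow_mul t, h2, h1]
    ring

section
variable {F K : Type} [Field F] [Field K] [Fintype F] [Fintype K] [Algebra F K]

open Classical in
noncomputable def cnt (F : Type) {K : Type} [Field F] [Field K] [Fintype F] [Fintype K] [Algebra F K]
    (a : K) (t : F) : ℕ :=
  (Finset.univ.filter fun x : K => Algebra.trace F K (a * x ^ (Fintype.card F + 1)) = t).card

open Classical in
theorem cnt_const (m : ℕ) 
    (hm : (Fintype.card F + 1) * (m * (Fintype.card F - 1)) = Fintype.card K - 1)
    (a : K) (t : F) (ht : t ≠ 0) : cnt F a t = cnt F a 1 := by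
  have hq := Fintype.one_lt_card (α := F)
  have hK := Fintype.one_lt_card (α := K)
  have hpos : 0 < m * (Fintype.card F - 1) := by
    rcases Nat.eq_zero_or_pos (m * (Fintype.card F - 1)) with h | h
    · rw [h] at hm; omega
    · exact h
  obtain ⟨c, hc0, hc⟩ := aux_root _ _ hm hpos (algebraMap F K t) (by simpa using ht) (by
    rw [mul_comm m, pow_mul, ← map_pow, FiniteField.pow_card_sub_one_eq_one t ht]; simp)
  unfold cnt
  symm
  have key : ∀ x : K, Algebra.trace F K (a * (c * x) ^ (Fintype.card F + 1))
      = t * Algebra.trace F K (a * x ^ (Fintype.card F + 1)) := by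
    intro x
    rw [mul_pow, hc, mul_left_comm, ← Algebra.smul_def, map_smul, smul_eq_mul]
  refine Finset.card_bij (fun x _ => c * x) ?_ ?_ ?_
  · intro x hx
    simp only [Finset.mem_filter, Finset.mem_univ, true_and] at hx ⊢
    rw [key, hx, mul_one]
  · intro x _ y _ h
    exact mul_left_cancel₀ hc0 h
  · intro y hy
    simp only [Finset.mem_filter, Finset.mem_univ, true_and] at hy
    refine ⟨y / c, ?_, by field_simp⟩
    simp only [Finset.mem_filter, Finset.mem_univ, true_and]
    have := key (y / c)
    rw [mul_div_cancel₀ _ hc0, hy] at this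
    apply mul_left_cancel₀ ht
    rw [← this, mul_one]

open Classical in
theorem cnt_sum (m : ℕ) 
    (hm : (Fintype.card F + 1) * (m * (Fintype.card F - 1)) = Fintype.card K - 1)
    (a : K) : cnt F a 0 + (Fintype.card F - 1) * cnt F a 1 = Fintype.card K := by
  have h := Finset.card_eq_sum_card_fiberwise (s := (Finset.univ : Finset K))
    (f := fun x => Algebra.trace F K (a * x ^ (Fintype.card F + 1))) (t := (Finset.univ : Finset F))
    (by intro x _; simp)
  rw [Finset.card_univ] at h
  rw [h, ← Finset.add_sum_erase _ _ (Finset.mem_univ 0)]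
  change _ = cnt F a 0 + ∑ t ∈ Finset.univ.erase 0, cnt F a t
  rw [Finset.sum_const_nat (m := cnt F a 1), Finset.card_erase_of_mem (Finset.mem_univ _), Finset.card_univ]
  intro t ht
  exact cnt_const m hm a t (Finset.ne_of_mem_erase ht)

open Classical in
theorem char_sum (m : ℕ) 
    (hm : (Fintype.card F + 1) * (m * (Fintype.card F - 1)) = Fintype.card K - 1)
    (ψ : AddChar F ℂ) (hψ : ψ ≠ 1) (a : K) :
    ∑ x : K, ψ (Algebra.trace F K (a * x ^ (Fintype.card F + 1)))
      = (((cnt F a 0 : ℤ) - cnt F a 1 : ℤ) : ℂ) := by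
  rw [← Finset.sum_fiberwise_of_maps_to (s := (Finset.univ : Finset K))
    (g := fun x => Algebra.trace F K (a * x ^ (Fintype.card F + 1))) (t := (Finset.univ : Finset F))
    (by intro x _; simp)]
  have h1 : ∀ t : F, (∑ x ∈ Finset.univ.filter (fun x : K => Algebra.trace F K (a * x ^ (Fintype.card F + 1)) = t),
      ψ (Algebra.trace F K (a * x ^ (Fintype.card F + 1)))) = cnt F a t * ψ t := by
    intro t
    rw [Finset.sum_congr rfl (g := fun _ => ψ t), Finset.sum_const, nsmul_eq_mul]
    · rfl
    · intro x hx
      rw [(Finset.mem_filter.mp hx).2]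
  rw [Finset.sum_congr rfl (fun t _ => h1 t), ← Finset.add_sum_erase _ _ (Finset.mem_univ 0),
    Finset.sum_congr rfl (g := fun t => (cnt F a 1 : ℂ) * ψ t), ← Finset.mul_sum]
  · have h0 := AddChar.sum_eq_zero_of_ne_one hψ
    rw [← Finset.add_sum_erase _ _ (Finset.mem_univ 0)] at h0
    rw [AddChar.map_zero_eq_one] at h0 ⊢
    push_cast
    linear_combination (cnt F a 1 : ℂ) * h0
  · intro t ht
    rw [cnt_const m hm a t (Finset.ne_of_mem_erase ht)]

theorem exists_char (F : Type) [Field F] [Fintype F] : ∃ ψ : AddChar F ℂ, ψ ≠ 1 :=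
  ⟨AddChar.FiniteField.primitiveChar_to_Complex F, by
    have h := AddChar.FiniteField.primitiveChar_to_Complex_isPrimitive F (one_ne_zero)
    rwa [AddChar.mulShift_one] at h⟩

theorem ext_char (ψ : AddChar F ℂ) (hψ : ψ ≠ 1) :
    ∃ Ψ : AddChar K ℂ, Ψ.IsPrimitive ∧ ∀ x, Ψ x = ψ (Algebra.trace F K x) := by
  refine ⟨ψ.compAddMonoidHom (Algebra.trace F K).toAddMonoidHom, ?_, fun x => rfl⟩
  apply AddChar.IsPrimitive.of_ne_one
  obtain ⟨t, ht⟩ := AddChar.ne_one_iff.mp hψ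
  obtain ⟨x, rfl⟩ := Algebra.trace_surjective F K t
  exact AddChar.ne_one_iff.mpr ⟨x, ht⟩

open Classical in
theorem moment (m : ℕ) 
    (hm : (Fintype.card F + 1) * (m * (Fintype.card F - 1)) = Fintype.card K - 1) :
    ∑ a : K, ((cnt F a 0 : ℤ) - cnt F a 1) = Fintype.card K := by
  obtain ⟨ψ, hψ⟩ := exists_char F
  obtain ⟨Ψ, hΨ1, hΨa⟩ := ext_char (K := K) ψ hψ
  have : ((∑ a : K, ((cnt F a 0 : ℤ) - cnt F a 1) : ℤ) : ℂ) = ((Fintype.card K : ℤ) : ℂ) := by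
    rw [Int.cast_sum, ← Finset.sum_congr rfl (fun a _ => char_sum m hm ψ hψ a), Finset.sum_comm]
    simp only [← hΨa, AddChar.sum_mulShift _ hΨ1]
    rw [Finset.sum_eq_single 0]
    · simp
    · intro b _ hb
      simp [hb]
    · simp
  exact_mod_cast this

open Classical in
theorem cnt_mod (hm : (Fintype.card F + 1) ∣ Fintype.card K - 1) (a : K) :
    ∃ j : ℤ, (cnt F a 0 : ℤ) - cnt F a 1 = 1 + (Fintype.card F + 1) * j := by
  have h0 := aux_fiber _ hm (fun y => Algebra.trace F K (a * y) = 0)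
  have h1 := aux_fiber _ hm (fun y => Algebra.trace F K (a * y) = 1)
  set A := (Finset.univ.filter fun y : K => (y ≠ 0 ∧ ∃ c, c ^ (Fintype.card F + 1) = y) ∧ Algebra.trace F K (a * y) = 0).card
  set B := (Finset.univ.filter fun y : K => (y ≠ 0 ∧ ∃ c, c ^ (Fintype.card F + 1) = y) ∧ Algebra.trace F K (a * y) = 1).card
  have c0 : cnt F a 0 = (Fintype.card F + 1) * A + 1 := by
    rw [← h0, cnt, ← Finset.card_insert_of_notMem (a := (0:K)) (by simp)]
    congr 1
    ext x
    by_cases hx : x = 0 <;> simp [hx]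
  have c1 : cnt F a 1 = (Fintype.card F + 1) * B := by
    rw [← h1, cnt]
    congr 1
    ext x
    by_cases hx : x = 0 <;> simp [hx]
  refine ⟨(A : ℤ) - B, ?_⟩
  rw [c0, c1]
  push_cast
  ring

open Classical in
theorem rad_card (N : ℕ) (hN : (Finset.univ.filter fun u : K => u ^ (Fintype.card F ^ 2) = u).card = N)
    (a : K) (ha : a ≠ 0) :
    (Finset.univ.filter fun z : K => a * z + a ^ Fintype.card F * z ^ (Fintype.card F ^ 2) = 0).card = 1 ∨
    (Finset.univ.filter fun z : K => a * z + a ^ Fintype.card F * z ^ (Fintype.card F ^ 2) = 0).card = N := by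
  have hq : Fintype.card F ≠ 0 := Fintype.card_ne_zero
  set q := Fintype.card F
  by_cases h : ∃ w : K, w ≠ 0 ∧ a * w + a ^ q * w ^ (q ^ 2) = 0
  · right
    obtain ⟨w, hw0, hw⟩ := h
    rw [← hN]
    symm
    refine Finset.card_bij (fun u _ => u * w) ?_ ?_ ?_
    · intro u hu
      simp only [Finset.mem_filter, Finset.mem_univ, true_and] at hu ⊢
      rw [mul_pow, hu]
      linear_combination u * hw
    · intro u _ v _ huv
      exact mul_right_cancel₀ hw0 huv
    · intro z hz
      simp only [Finset.mem_filter, Finset.mem_univ, true_and] at hz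
      refine ⟨z / w, ?_, by field_simp⟩
      simp only [Finset.mem_filter, Finset.mem_univ, true_and]
      rw [div_pow, div_eq_div_iff (pow_ne_zero _ hw0) hw0]
      apply mul_left_cancel₀ (pow_ne_zero q ha)
      linear_combination w * hz - z * hw
  · left
    push Not at h
    rw [Finset.card_eq_one]
    refine ⟨0, ?_⟩
    ext z
    simp only [Finset.mem_filter, Finset.mem_univ, true_and, Finset.mem_singleton]
    constructor
    · intro hz
      by_contra hz0
      exact h z hz0 hz
    · rintro rfl
      simp [hq]

open Classical in
theorem sq_sum (m : ℕ) (hk : Even (Module.finrank F K))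
    (hm : (Fintype.card F + 1) * (m * (Fintype.card F - 1)) = Fintype.card K - 1)
    (a : K) :
    ((cnt F a 0 : ℤ) - cnt F a 1) ^ 2 = Fintype.card K *
      ((Finset.univ.filter fun z : K => a * z + a ^ Fintype.card F * z ^ (Fintype.card F ^ 2) = 0).card : ℤ) := by
  obtain ⟨ψ, hψ⟩ := exists_char F
  have hψ' : ψ⁻¹ ≠ 1 := inv_ne_one.mpr hψ
  set q := Fintype.card F with hq
  obtain ⟨Ψ, hΨ1, hΨa⟩ := ext_char (K := K) ψ hψ
  have e1 := char_sum m hm ψ hψ a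
  have e2 := char_sum m hm ψ⁻¹ hψ' a
  rw [← hq] at e1 e2
  have hL : ∀ z : K, a * z + a ^ q * z ^ (q ^ 2) = 0 → Ψ (a * z ^ (q + 1)) = 1 := by
    intro z hz
    rw [hΨa, aux_tr0 hk, AddChar.map_zero_eq_one]
    rw [← hq]
    have : a * z ^ (q + 1) + (a * z ^ (q + 1)) ^ q = z ^ q * (a * z + a ^ q * z ^ (q ^ 2)) := by ring
    rw [this, hz, mul_zero]
  have hshift : ∀ y z : K, Ψ (a * (y + z) ^ (q + 1)) * ψ⁻¹ (Algebra.trace F K (a * y ^ (q + 1)))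
      = Ψ (a * z ^ (q + 1)) * Ψ (y ^ q * (a * z + a ^ q * z ^ (q ^ 2))) := by
    intro y z
    have h3 : Ψ (a * y * z ^ q) = Ψ (y ^ q * (a ^ q * z ^ (q ^ 2))) := by
      rw [hΨa, hΨa, ← aux_trfrob (F := F) (a * y * z ^ q), ← hq]
      congr 2
      ring
    have hadd : (y + z) ^ q = y ^ q + z ^ q := aux_frob (F := F) y z
    have h4 : a * (y + z) ^ (q + 1)
        = a * y ^ (q + 1) + (a * z ^ (q + 1) + (y ^ q * (a * z) + a * y * z ^ q)) := by
      rw [pow_succ, hadd]; ring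
    rw [AddChar.inv_apply', ← hΨa, h4, mul_add (y ^ q)]
    simp only [AddChar.map_add_eq_mul]
    rw [h3]
    have : Ψ (a * y ^ (q + 1)) ≠ 0 := by
      intro h0
      have := AddChar.map_add_eq_mul Ψ (a * y ^ (q + 1)) (-(a * y ^ (q + 1)))
      rw [h0, add_neg_cancel, AddChar.map_zero_eq_one, zero_mul] at this
      exact one_ne_zero this
    field_simp
  have hbij : Function.Bijective (fun y : K => y ^ q) :=
    (FiniteField.frobeniusAlgEquivOfAlgebraic F K).bijective
  have h5 : ((((cnt F a 0 : ℤ) - cnt F a 1 : ℤ) : ℂ)) * ((((cnt F a 0 : ℤ) - cnt F a 1 : ℤ) : ℂ))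
      = (Fintype.card K : ℂ) * ((Finset.univ.filter fun z : K => a * z + a ^ q * z ^ (q ^ 2) = 0).card : ℂ) := by
    conv_lhs => 
      congr
      · rw [← e1]
      · rw [← e2]
    rw [Finset.sum_mul_sum, Finset.sum_comm]
    calc _ = ∑ y : K, ∑ z : K, Ψ (a * z ^ (q + 1)) * Ψ (y ^ q * (a * z + a ^ q * z ^ (q ^ 2))) := by
          refine Finset.sum_congr rfl fun y _ => ?_
          rw [← Equiv.sum_comp (Equiv.addLeft y)]
          refine Finset.sum_congr rfl fun z _ => ?_
          rw [← hshift, hΨa]; rfl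
      _ = ∑ z : K, Ψ (a * z ^ (q + 1)) * (if a * z + a ^ q * z ^ (q ^ 2) = 0 then (Fintype.card K : ℂ) else 0) := by
          rw [Finset.sum_comm]
          refine Finset.sum_congr rfl fun z _ => ?_
          rw [← Finset.mul_sum, hbij.sum_comp (fun y => Ψ (y * (a * z + a ^ q * z ^ (q ^ 2)))),
            AddChar.sum_mulShift _ hΨ1]
          push_cast; rfl
      _ = ∑ z : K, if a * z + a ^ q * z ^ (q ^ 2) = 0 then (Fintype.card K : ℂ) else 0 := by
          refine Finset.sum_congr rfl fun z _ => ?_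
          split_ifs with h
          · rw [hL z h, one_mul]
          · simp
      _ = _ := by
          rw [← Finset.sum_filter, Finset.sum_const, nsmul_eq_mul, mul_comm]
  rw [sq]
  exact_mod_cast h5

open Classical in
theorem S_val (m h : ℕ) (hh : Even h) (hK : Fintype.card K = Fintype.card F ^ (2 * h))
    (hm : (Fintype.card F + 1) * (m * (Fintype.card F - 1)) = Fintype.card K - 1)
    (hN : (Finset.univ.filter fun u : K => u ^ (Fintype.card F ^ 2) = u).card = Fintype.card F ^ 2)
    (a : K) (ha : a ≠ 0) :
    (cnt F a 0 : ℤ) - cnt F a 1 = (Fintype.card F : ℤ) ^ h ∨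
    (cnt F a 0 : ℤ) - cnt F a 1 = - (Fintype.card F : ℤ) ^ (h + 1) := by
  have hfr : Module.finrank F K = 2 * h := by
    have := Module.card_eq_pow_finrank (K := F) (V := K)
    rw [hK] at this
    exact (Nat.pow_right_injective (Fintype.one_lt_card (α := F)) this).symm
  have hsq := sq_sum (F := F) m (by rw [hfr]; exact even_two_mul h) hm a
  obtain ⟨j, hj⟩ := cnt_mod (F := F) (Dvd.intro _ hm) a
  have hq1 := Fintype.one_lt_card (α := F)
  have hodd : ((Fintype.card F : ℤ) + 1) ∣ (Fintype.card F : ℤ) ^ h - 1 := by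
    obtain ⟨r, rfl⟩ := hh
    have h2 : ((Fintype.card F : ℤ) + 1) ∣ (Fintype.card F : ℤ) ^ 2 - 1 := ⟨Fintype.card F - 1, by ring⟩
    rw [← two_mul, pow_mul]
    exact h2.trans (by simpa using sub_dvd_pow_sub_pow ((Fintype.card F : ℤ) ^ 2) 1 r)
  obtain ⟨l, hl⟩ := hodd
  have hno : ∀ x : ℤ, ((Fintype.card F : ℤ) + 1) * x ≠ 2 := by
    intro x hx
    have h3 : (3 : ℤ) ≤ (Fintype.card F : ℤ) + 1 := by omega
    have h4 := Int.le_of_dvd (by norm_num) (Dvd.intro _ hx)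
    omega
  rw [hK] at hsq
  set S := (cnt F a 0 : ℤ) - cnt F a 1
  set q : ℤ := (Fintype.card F : ℤ) with hqdef
  rcases rad_card (F := F) _ hN a ha with hr | hr
  · left
    rw [hr] at hsq
    have : S ^ 2 = (q ^ h) ^ 2 := by rw [hsq]; push_cast; ring
    rcases sq_eq_sq_iff_eq_or_eq_neg.mp this with h1 | h1
    · exact h1
    · exfalso
      apply hno (-(j + l))
      linear_combination hj + hl - h1
  · right
    rw [hr] at hsq
    have : S ^ 2 = (q ^ (h + 1)) ^ 2 := by rw [hsq]; push_cast; ring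
    rcases sq_eq_sq_iff_eq_or_eq_neg.mp this with h1 | h1
    · exfalso
      apply hno (q ^ h - j - l)
      linear_combination hj + hl - h1
    · exact h1

end

open Classical in
theorem aux_fix {K : Type} [Field K] [Fintype K] (n : ℕ) (hn : 0 < n) (h : n - 1 ∣ Fintype.card K - 1) :
    (Finset.univ.filter fun u : K => u ^ n = u).card = n := by
  have h1 := aux_fiber (K := K) (n - 1) h (fun y => y = 1)
  have h2 : (Finset.univ.filter fun y : K => (y ≠ 0 ∧ ∃ c, c ^ (n - 1) = y) ∧ y = 1) = {1} := by
    ext y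
    simp only [Finset.mem_filter, Finset.mem_univ, true_and, Finset.mem_singleton]
    constructor
    · exact fun h => h.2
    · rintro rfl
      exact ⟨⟨one_ne_zero, 1, one_pow _⟩, rfl⟩
  rw [h2, Finset.card_singleton, mul_one] at h1
  have h3 : (Finset.univ.filter fun u : K => u ^ n = u)
      = insert 0 (Finset.univ.filter fun x : K => x ≠ 0 ∧ x ^ (n - 1) = 1) := by
    ext x
    obtain ⟨j, rfl⟩ : ∃ j, n = j + 1 := ⟨n - 1, by omega⟩
    by_cases hx : x = 0
    · simp [hx]
    · simp [hx, pow_succ]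
  rw [h3, Finset.card_insert_of_notMem (by simp), h1]
  omega

theorem aux_tr2 {F E : Type} [Field F] [Field E] [Fintype F] [Fintype E] [Algebra F E]
    (hE : Fintype.card E = Fintype.card F ^ 2) (s : E) :
    Algebra.trace F E s = 0 ↔ s + s ^ Fintype.card F = 0 := by
  have hfr : Module.finrank F E = 2 := by
    have := Module.card_eq_pow_finrank (K := F) (V := E)
    rw [hE] at this
    exact (Nat.pow_right_injective (Fintype.one_lt_card (α := F)) this).symm
  have h := FiniteField.algebraMap_trace_eq_sum_pow F E s
  rw [hfr, Finset.sum_range_succ, Finset.sum_range_one, Nat.card_eq_fintype_card, pow_zero, pow_one,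
    pow_one] at h
  rw [← h]
  simp

section
variable {F E K : Type} [Field F] [Field E] [Field K] [Fintype F] [Fintype E] [Fintype K]
    [Algebra F E] [Algebra E K] [Algebra F K] 

theorem exists_d0 (hE : Fintype.card E = Fintype.card F ^ 2) :
    ∃ d : K, d ≠ 0 ∧ Algebra.trace F E (Algebra.norm E d) = 0 := by
  have hq := Fintype.one_lt_card (α := F)
  obtain ⟨x, y, hxy, h⟩ := Fintype.exists_ne_map_eq_of_card_lt (fun x : E => Algebra.trace F E x)
    (by rw [hE]; nlinarith)
  obtain ⟨d, hd⟩ := FiniteField.norm_surjective E K (x - y)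
  refine ⟨d, ?_, ?_⟩
  · rintro rfl
    rw [Algebra.norm_zero] at hd
    exact hxy (sub_eq_zero.mp hd.symm)
  · rw [hd, map_sub, sub_eq_zero]
    exact h

open Classical in
theorem weight (m : ℕ) (hE : Fintype.card E = Fintype.card F ^ 2)
    (hm : (Fintype.card F + 1) * (m * (Fintype.card F - 1)) = Fintype.card K - 1)
    (hnorm : ∀ x : K, algebraMap E K (Algebra.norm E x) = x ^ m)
    (d0 : K) (hd0 : d0 ≠ 0) (hd : Algebra.trace F E (Algebra.norm E d0) = 0) (b : K) :
    (Fintype.card F + 1) *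
      Nat.card {d : K // (d ≠ 0 ∧ Algebra.trace F E (Algebra.norm E d) = 0) ∧
            Algebra.trace F K (b * d) ≠ 0} = (Fintype.card F - 1) * cnt F (b * d0) 1 := by
  have hK := Fintype.one_lt_card (α := K)
  have hpos : 0 < m * (Fintype.card F - 1) := by
    rcases Nat.eq_zero_or_pos (m * (Fintype.card F - 1)) with h | h
    · rw [h] at hm; omega
    · exact h
  have h1 := aux_fiber _ (Dvd.intro _ hm) (fun y => Algebra.trace F K (b * d0 * y) ≠ 0)
  have h2 := cnt_sum m hm (b * d0)
  have h3 : (Finset.univ.filter fun x : K => x ≠ 0 ∧ Algebra.trace F K (b * d0 * x ^ (Fintype.card F + 1)) ≠ 0)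
      = Finset.univ.filter (fun x : K => ¬ Algebra.trace F K (b * d0 * x ^ (Fintype.card F + 1)) = 0) := by
    ext x
    by_cases hx : x = 0 <;> simp [hx]
  have h4 := Finset.card_filter_add_card_filter_not (s := (Finset.univ : Finset K))
    (fun x : K => Algebra.trace F K (b * d0 * x ^ (Fintype.card F + 1)) = 0)
  rw [Finset.card_univ] at h4
  change cnt F (b * d0) 0 + _ = _ at h4
  have h5 : (Fintype.card F - 1) * cnt F (b * d0) 1 = (Finset.univ.filter fun x : K => x ≠ 0 ∧ Algebra.trace F K (b * d0 * x ^ (Fintype.card F + 1)) ≠ 0).card := by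
    rw [h3]; omega
  rw [h5]
  refine Eq.trans ?_ (h1.symm.trans (by congr!))
  congr 1
  rw [Nat.card_eq_fintype_card, Fintype.card_subtype]
  symm
  rw [aux_tr2 hE] at hd
  have hmne : m ≠ 0 := by rintro rfl; simp at hpos
  refine Finset.card_bij (fun y _ => d0 * y) ?_ ?_ ?_
  · intro y hy
    simp only [Finset.mem_filter, Finset.mem_univ, true_and] at hy ⊢
    obtain ⟨⟨hy0, c, rfl⟩, ht⟩ := hy
    refine ⟨⟨mul_ne_zero hd0 hy0, ?_⟩, by rwa [← mul_assoc]⟩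
    rw [aux_tr2 hE, map_mul, map_pow]
    have hv := FiniteField.pow_card (Algebra.norm E c)
    rw [hE] at hv
    set v := Algebra.norm E c
    set s := Algebra.norm E d0
    set q := Fintype.card F
    have : s * v ^ (q + 1) + (s * v ^ (q + 1)) ^ q = s * v ^ (q + 1) + s ^ q * (v ^ (q ^ 2) * v ^ q) := by
      ring
    rw [this, hv]
    linear_combination v ^ (q + 1) * hd
  · intro u _ v _ huv
    exact mul_left_cancel₀ hd0 huv
  · intro d hdd
    simp only [Finset.mem_filter, Finset.mem_univ, true_and] at hdd
    obtain ⟨⟨hdn, htr⟩, ht⟩ := hdd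
    have hdd0 : d0 * (d / d0) = d := by field_simp
    refine ⟨d / d0, ?_, hdd0⟩
    simp only [Finset.mem_filter, Finset.mem_univ, true_and]
    rw [mul_assoc, hdd0]
    refine ⟨⟨div_ne_zero hdn hd0, ?_⟩, ht⟩
    rw [aux_tr2 hE] at htr
    have hn0 : ∀ x : K, x ≠ 0 → Algebra.norm E x ≠ 0 := by
      intro x hx h
      have := hnorm x
      rw [h, map_zero] at this
      exact pow_ne_zero m hx this.symm
    obtain ⟨c, _, hc⟩ := aux_root _ _ hm hpos (d / d0) (div_ne_zero hdn hd0) (by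
      rw [pow_mul, ← hnorm, ← map_pow, ← map_one (algebraMap E K)]
      congr 1
      have e1 : Algebra.norm E d = Algebra.norm E d0 * Algebra.norm E (d / d0) := by
        rw [← map_mul, hdd0]
      have hw := hn0 (d / d0) (div_ne_zero hdn hd0)
      have hs := hn0 d0 hd0
      rw [e1] at htr
      set w := Algebra.norm E (d / d0)
      set s := Algebra.norm E d0
      have hq1 := Fintype.one_lt_card (α := F)
      obtain ⟨j, hj⟩ : ∃ j, Fintype.card F = j + 1 := ⟨Fintype.card F - 1, by omega⟩
      rw [hj] at htr hd ⊢
      rw [Nat.add_sub_cancel]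
      apply mul_left_cancel₀ (mul_ne_zero hs hw)
      rw [mul_pow] at htr
      have : s ^ (j + 1) = - s := by linear_combination hd
      rw [this, pow_succ] at htr
      linear_combination -htr)
    exact ⟨c, hc⟩

open Classical in
theorem count_S (m h : ℕ) (hh : Even h) (hK : Fintype.card K = Fintype.card F ^ (2 * h))
    (hm : (Fintype.card F + 1) * (m * (Fintype.card F - 1)) = Fintype.card K - 1)
    (hN : (Finset.univ.filter fun u : K => u ^ (Fintype.card F ^ 2) = u).card = Fintype.card F ^ 2)
    (d0 : K) (hd0 : d0 ≠ 0) :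
    (Fintype.card F + 1) * (Finset.univ.filter fun b : K => b ≠ 0 ∧
      (cnt F (b * d0) 0 : ℤ) - cnt F (b * d0) 1 = (Fintype.card F : ℤ) ^ h).card
      = Fintype.card F * (Fintype.card K - 1 : ℤ) ∧
    (Fintype.card F + 1) * (Finset.univ.filter fun b : K => b ≠ 0 ∧
      (cnt F (b * d0) 0 : ℤ) - cnt F (b * d0) 1 = - (Fintype.card F : ℤ) ^ (h + 1)).card
      = (Fintype.card K - 1 : ℤ) := by
  have hq1 := Fintype.one_lt_card (α := F)
  have hK1 := Fintype.one_lt_card (α := K)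
  set f : K → ℤ := fun b => (cnt F (b * d0) 0 : ℤ) - cnt F (b * d0) 1 with hf
  set q : ℤ := (Fintype.card F : ℤ) with hq
  have hq0 : (0 : ℤ) < q := by omega
  have hqh : (0 : ℤ) < q ^ h := by positivity
  have hqh1 : (0 : ℤ) < q ^ (h + 1) := by positivity
  have hval : ∀ b, b ≠ 0 → f b = q ^ h ∨ f b = - q ^ (h + 1) := fun b hb =>
    S_val m h hh hK hm hN (b * d0) (mul_ne_zero hb hd0)
  have hsum : ∑ b : K, f b = Fintype.card K := by
    rw [← moment (F := F) (K := K) m hm]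
    exact Equiv.sum_comp (Equiv.mulRight₀ d0 hd0) (fun a => (cnt F a 0 : ℤ) - cnt F a 1)
  have hf0 : f 0 = Fintype.card K := by
    simp [hf, cnt]
  have hsum' : ∑ b ∈ Finset.univ.erase (0 : K), f b = 0 := by
    rw [← Finset.add_sum_erase _ _ (Finset.mem_univ 0), hf0] at hsum
    linarith
  have hc := Finset.card_filter_add_card_filter_not (s := Finset.univ.erase (0 : K)) (fun b => f b = q ^ h)
  rw [← Finset.sum_filter_add_sum_filter_not _ (fun b => f b = q ^ h)] at hsum'
  have hA : (Finset.univ.erase (0 : K)).filter (fun b => f b = q ^ h)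
      = Finset.univ.filter fun b : K => b ≠ 0 ∧ f b = q ^ h := by
    ext b; simp
  have hB : (Finset.univ.erase (0 : K)).filter (fun b => ¬ f b = q ^ h)
      = Finset.univ.filter fun b : K => b ≠ 0 ∧ f b = - q ^ (h + 1) := by
    ext b
    simp only [Finset.mem_filter, Finset.mem_univ, Finset.mem_erase, true_and, and_true]
    refine and_congr_right fun hb => ?_
    rcases hval b hb with h1 | h1 <;> rw [h1]
    · constructor
      · intro h; exact absurd rfl h
      · intro h; linarith
    · constructor
      · intro h; rfl
      · intro h1 h2; linarith
  rw [hA, hB] at hc hsum'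
  change (q + 1) * ((Finset.univ.filter fun b : K => b ≠ 0 ∧ f b = q ^ h).card : ℤ) = _ ∧
    (q + 1) * ((Finset.univ.filter fun b : K => b ≠ 0 ∧ f b = - q ^ (h + 1)).card : ℤ) = _
  rw [Finset.sum_congr rfl (g := fun _ => q ^ h) (fun b hb => (Finset.mem_filter.mp hb).2.2),
    Finset.sum_congr (s₁ := Finset.univ.filter fun b : K => b ≠ 0 ∧ f b = - q ^ (h + 1)) rfl
      (g := fun _ => - q ^ (h + 1)) (fun b hb => (Finset.mem_filter.mp hb).2.2),
    Finset.sum_const, Finset.sum_const, nsmul_eq_mul, nsmul_eq_mul] at hsum'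
  rw [Finset.card_erase_of_mem (Finset.mem_univ _), Finset.card_univ] at hc
  set A := (Finset.univ.filter fun b : K => b ≠ 0 ∧ f b = q ^ h).card
  set B := (Finset.univ.filter fun b : K => b ≠ 0 ∧ f b = - q ^ (h + 1)).card
  have hAB : (A : ℤ) = q * B := by
    apply mul_right_cancel₀ hqh.ne'
    linear_combination hsum'
  have hc' : (A : ℤ) + B = Fintype.card K - 1 := by omega
  constructor
  · linear_combination q * hc' + hAB
  · linear_combination hc' - hAB

end

/-- **Proposition 1, `k ≡ 0 (mod 4)`.** Let `q` be a power of a prime `p`,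
`k ≡ 0 (mod 4)`, `k > 0`, and `D = {x ∈ F_{q^k}ˣ : Tr_{q²/q}(x^{(q^k-1)/(q²-1)}) = 0}`.
Then exactly `q(q^k-1)/(q+1)` nonzero `b` give weight `(q-1)(q^{k-1} - q^{k/2-1})/(q+1)`,
exactly `(q^k-1)/(q+1)` give weight `(q-1)(q^{k-1} + q^{k/2})/(q+1)`, every nonzero
codeword has one of these two weights, and the minimum distance is the smaller weight. -/
theorem stmt6 (p e q k : ℕ) [Fact p.Prime] (he : 0 < e) (hq : q = p ^ e)
    (hk : 0 < k) (hk4 : k % 4 = 0)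
    (Fq Ff Fk : Type) [Field Fq] [Field Ff] [Field Fk]
    [Fintype Fq] [Fintype Ff] [Fintype Fk]
    [Algebra Fq Ff] [Algebra Ff Fk] [Algebra Fq Fk] [IsScalarTower Fq Ff Fk]
    (hcq : Fintype.card Fq = q) (hcf : Fintype.card Ff = q ^ 2)
    (hck : Fintype.card Fk = q ^ k)
    (hnorm : ∀ x : Fk,
      algebraMap Ff Fk (Algebra.norm Ff x) = x ^ ((q ^ k - 1) / (q ^ 2 - 1))) :
    (Nat.card {b : Fk // b ≠ 0 ∧
        (Nat.card {d : Fk // (d ≠ 0 ∧ Algebra.trace Fq Ff (Algebra.norm Ff d) = 0) ∧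
            Algebra.trace Fq Fk (b * d) ≠ 0} : ℚ)
          = ((q : ℚ) - 1) * ((q : ℚ) ^ (k - 1) - (q : ℚ) ^ (k / 2 - 1)) / ((q : ℚ) + 1)} : ℚ)
      = (q : ℚ) * ((q : ℚ) ^ k - 1) / ((q : ℚ) + 1) ∧
    (Nat.card {b : Fk // b ≠ 0 ∧
        (Nat.card {d : Fk // (d ≠ 0 ∧ Algebra.trace Fq Ff (Algebra.norm Ff d) = 0) ∧
            Algebra.trace Fq Fk (b * d) ≠ 0} : ℚ)
          = ((q : ℚ) - 1) * ((q : ℚ) ^ (k - 1) + (q : ℚ) ^ (k / 2)) / ((q : ℚ) + 1)} : ℚ)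
      = ((q : ℚ) ^ k - 1) / ((q : ℚ) + 1) ∧
    (∀ b : Fk, b ≠ 0 →
      (Nat.card {d : Fk // (d ≠ 0 ∧ Algebra.trace Fq Ff (Algebra.norm Ff d) = 0) ∧
          Algebra.trace Fq Fk (b * d) ≠ 0} : ℚ)
          = ((q : ℚ) - 1) * ((q : ℚ) ^ (k - 1) - (q : ℚ) ^ (k / 2 - 1)) / ((q : ℚ) + 1) ∨
      (Nat.card {d : Fk // (d ≠ 0 ∧ Algebra.trace Fq Ff (Algebra.norm Ff d) = 0) ∧
          Algebra.trace Fq Fk (b * d) ≠ 0} : ℚ)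
          = ((q : ℚ) - 1) * ((q : ℚ) ^ (k - 1) + (q : ℚ) ^ (k / 2)) / ((q : ℚ) + 1)) ∧
    (∀ b : Fk, b ≠ 0 →
      ((q : ℚ) - 1) * ((q : ℚ) ^ (k - 1) - (q : ℚ) ^ (k / 2 - 1)) / ((q : ℚ) + 1)
        ≤ (Nat.card {d : Fk // (d ≠ 0 ∧ Algebra.trace Fq Ff (Algebra.norm Ff d) = 0) ∧
            Algebra.trace Fq Fk (b * d) ≠ 0} : ℚ)) := by
  classical
  subst hcq
  have hq1 := Fintype.one_lt_card (α := Fq)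
  have hK1 := Fintype.one_lt_card (α := Fk)
  obtain ⟨r, hr⟩ : ∃ r, k = 2 * (r + r) := ⟨k / 4, by omega⟩
  have hdvd : Fintype.card Fq ^ 2 - 1 ∣ Fintype.card Fq ^ k - 1 := by
    rw [hr, pow_mul]
    simpa using Nat.sub_dvd_pow_sub_pow (Fintype.card Fq ^ 2) 1 (r + r)
  set m := (Fintype.card Fq ^ k - 1) / (Fintype.card Fq ^ 2 - 1) with hmdef
  have hm0 : (Fintype.card Fq ^ 2 - 1) * m = Fintype.card Fq ^ k - 1 := Nat.mul_div_cancel' hdvd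
  have hm : (Fintype.card Fq + 1) * (m * (Fintype.card Fq - 1)) = Fintype.card Fk - 1 := by
    rw [hck, ← hm0]
    have : Fintype.card Fq ^ 2 - 1 = (Fintype.card Fq + 1) * (Fintype.card Fq - 1) := by
      simpa using Nat.sq_sub_sq (Fintype.card Fq) 1
    rw [this]; ring
  have hN := aux_fix (K := Fk) (Fintype.card Fq ^ 2) (by positivity) (by rw [hck]; exact hdvd)
  have hK : Fintype.card Fk = Fintype.card Fq ^ (2 * (r + r)) := by rw [hck, hr]
  obtain ⟨d0, hd0, hd⟩ := exists_d0 (F := Fq) (E := Ff) (K := Fk) hcf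
  have hW := weight (F := Fq) (E := Ff) (K := Fk) m hcf hm hnorm d0 hd0 hd
  have hS : ∀ b : Fk, b ≠ 0 → _ := fun b hb =>
    S_val (F := Fq) m (r + r) ⟨r, rfl⟩ hK hm hN (b * d0) (mul_ne_zero hb hd0)
  have hcs := fun b : Fk => cnt_sum (F := Fq) m hm (b * d0)
  obtain ⟨hC1, hC2⟩ := count_S (F := Fq) (K := Fk) m (r + r) ⟨r, rfl⟩ hK hm hN d0 hd0
  have hr0 : 0 < r := by omega
  have hk1 : k - 1 = 2 * (r + r) - 1 := by omega
  have hk2 : k / 2 = r + r := by omega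
  rw [hk1, hk2]
  set W : Fk → ℕ := fun b => Nat.card {d : Fk // (d ≠ 0 ∧ Algebra.trace Fq Ff (Algebra.norm Ff d) = 0) ∧
            Algebra.trace Fq Fk (b * d) ≠ 0} with hWdef
  set S : Fk → ℤ := fun b => (cnt Fq (b * d0) 0 : ℤ) - cnt Fq (b * d0) 1 with hSdef
  set q := Fintype.card Fq with hqdef
  have hqQ : (1 : ℚ) < (q : ℚ) := by exact_mod_cast hq1
  obtain ⟨h, hh⟩ : ∃ h, r + r = h + 1 := ⟨r + r - 1, by omega⟩
  have hKQ : (Fintype.card Fk : ℚ) = (q : ℚ) ^ (2 * h + 2) := by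
    rw [hK, hh]; push_cast; ring
  have hWS : ∀ b : Fk, (W b : ℚ) = ((q : ℚ) - 1) * ((q : ℚ) ^ (2 * h + 1) - (S b : ℚ) / q) / ((q : ℚ) + 1) := by
    intro b
    have h1 : ((q : ℚ) + 1) * W b = ((q : ℚ) - 1) * cnt Fq (b * d0) 1 := by
      have : (((q + 1) * W b : ℕ) : ℚ) = (((q - 1) * cnt Fq (b * d0) 1 : ℕ) : ℚ) := by
        exact_mod_cast hW b
      push_cast [Nat.cast_sub hq1.le] at this
      exact this
    have h2 : (cnt Fq (b * d0) 0 : ℚ) + ((q : ℚ) - 1) * cnt Fq (b * d0) 1 = (q : ℚ) ^ (2 * h + 2) := by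
      rw [← hKQ]
      have : ((cnt Fq (b * d0) 0 + (q - 1) * cnt Fq (b * d0) 1 : ℕ) : ℚ) = (Fintype.card Fk : ℚ) := by
        exact_mod_cast hcs b
      push_cast [Nat.cast_sub hq1.le] at this
      exact this
    have h3 : (S b : ℚ) = (cnt Fq (b * d0) 0 : ℚ) - cnt Fq (b * d0) 1 := by
      simp [hSdef]
    rw [eq_div_iff (by linarith), h3]
    have h4 : (cnt Fq (b * d0) 1 : ℚ) = (q : ℚ) ^ (2 * h + 1) - ((cnt Fq (b * d0) 0 : ℚ) - cnt Fq (b * d0) 1) / q := by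
      field_simp
      linear_combination h2
    rw [← h4]
    linear_combination h1
  have e1 : 2 * (r + r) - 1 = 2 * h + 1 := by omega
  have e2 : r + r - 1 = h := by omega
  have e3 : k = 2 * h + 2 := by omega
  rw [hh] at hS hC1 hC2
  rw [e1, e2, e3, hh]
  have hqpos : (0 : ℚ) < q := by linarith
  have hiff1 : ∀ b, (W b : ℚ) = ((q : ℚ) - 1) * ((q : ℚ) ^ (2 * h + 1) - (q : ℚ) ^ h) / ((q : ℚ) + 1)
      ↔ S b = (q : ℤ) ^ (h + 1) := by
    intro b
    rw [hWS, div_left_inj' (by linarith), mul_right_inj' (by linarith), sub_right_inj,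
      div_eq_iff hqpos.ne', ← pow_succ]
    exact_mod_cast Iff.rfl
  have hiff2 : ∀ b, (W b : ℚ) = ((q : ℚ) - 1) * ((q : ℚ) ^ (2 * h + 1) + (q : ℚ) ^ (h + 1)) / ((q : ℚ) + 1)
      ↔ S b = - (q : ℤ) ^ (h + 1 + 1) := by
    intro b
    rw [hWS, div_left_inj' (by linarith), mul_right_inj' (by linarith), sub_eq_add_neg, add_right_inj,
      neg_eq_iff_eq_neg, div_eq_iff hqpos.ne', neg_mul, ← pow_succ]
    exact_mod_cast Iff.rfl
  have hor : ∀ b : Fk, b ≠ 0 →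
      (W b : ℚ) = ((q : ℚ) - 1) * ((q : ℚ) ^ (2 * h + 1) - (q : ℚ) ^ h) / ((q : ℚ) + 1) ∨
      (W b : ℚ) = ((q : ℚ) - 1) * ((q : ℚ) ^ (2 * h + 1) + (q : ℚ) ^ (h + 1)) / ((q : ℚ) + 1) := by
    intro b hb
    rw [hiff1, hiff2]
    exact hS b hb
  refine ⟨?_, ?_, hor, ?_⟩
  · change ((Nat.card {b : Fk // b ≠ 0 ∧ (W b : ℚ) = _} : ℕ) : ℚ) = _
    simp only [hiff1]
    rw [Nat.card_eq_fintype_card, Fintype.card_subtype, eq_div_iff (by linarith), ← hKQ]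
    have : ((((q : ℤ) + 1) * ((Finset.univ.filter fun b : Fk => b ≠ 0 ∧ S b = (q : ℤ) ^ (h + 1)).card : ℤ) : ℤ) : ℚ)
      = (((q : ℤ) * (Fintype.card Fk - 1 : ℤ) : ℤ) : ℚ) := by
        congr 1
    push_cast at this
    linear_combination this
  · change ((Nat.card {b : Fk // b ≠ 0 ∧ (W b : ℚ) = _} : ℕ) : ℚ) = _
    simp only [hiff2]
    rw [Nat.card_eq_fintype_card, Fintype.card_subtype, eq_div_iff (by linarith), ← hKQ]
    have : ((((q : ℤ) + 1) * ((Finset.univ.filter fun b : Fk => b ≠ 0 ∧ S b = - (q : ℤ) ^ (h + 1 + 1)).card : ℤ) : ℤ) : ℚ)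
      = (((Fintype.card Fk - 1 : ℤ) : ℤ) : ℚ) := by
        congr 1
    push_cast at this
    linear_combination this
  · intro b hb
    change _ ≤ (W b : ℚ)
    rcases hor b hb with h1 | h1 <;> rw [h1]
    have : (0 : ℚ) < (q : ℚ) ^ h := by positivity
    have : (0 : ℚ) < (q : ℚ) ^ (h + 1) := by positivity
    apply div_le_div_of_nonneg_right _ (by linarith)
    apply mul_le_mul_of_nonneg_left _ (by linarith)
    linarith
end
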